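/- arXiv:2504.13273 — 16 statements merged into one kernel-verified Lean document; each statement's English description precedes it below -/
import Mathlib

section
/- Let W be a random variable on a probability space with values in [0,1] almost surely, and suppose P(W ≤ t) ≤ C·t^(γ−1) for all t ∈ [0,1], where C ≥ 1 and γ > 1. Let c(γ) = ((γ−1)/γ)·C^(−1/(γ−1)). Then for every b ∈ [0,1], E[W·1{W ≤ b}] ≥ c(γ)·P(W ≤ b)^(γ/(γ−1)). Moreover, this bound is attained: if P(W ≤ t) = t^(γ−1) for all t ∈ [0,1] (so one may take C = 1), then E[W·1{W ≤ b}] = ((γ−1)/γ)·P(W ≤ b)^(γ/(γ−1)). -/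
open MeasureTheory

/-!
Write `F t = P(W ≤ t)`. The layer-cake formula applied to `(b - W)⁺` gives
`E[W·1{W ≤ b}] = b F(b) - ∫₀ᵇ F` (`setIntegral_le_eq`). If `F` is the exact power law, evaluating
the integral proves the equality. For the inequality, put `p = F b` and let `t` be the point where
the tail bound reaches `p`, that is `C t ^ (γ - 1) = p`. Then `t ≤ b`; bounding `F ≤ p` on `[t, b]`
and `F s ≤ C s ^ (γ - 1)` on `[0, t]` gives
`b p - ∫₀ᵇ F ≥ t p - C t ^ γ / γ = (1 - 1 / γ) t p`, which is the claimed lower bound.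
-/

/-- The distribution function is interval integrable, being monotone. -/
lemma intervalIntegrable_cdf {Ω : Type*} [MeasurableSpace Ω] (P : Measure Ω)
    [IsProbabilityMeasure P] (W : Ω → ℝ) (a b : ℝ) :
    IntervalIntegrable (fun t => P.real {ω | W ω ≤ t}) volume a b := by
  apply Monotone.intervalIntegrable
  intro s t hst
  exact measureReal_mono (fun ω (h : W ω ≤ s) => h.trans hst)

/-- Integration by parts for the truncated mean: this is the layer-cake formula for `(b - W)⁺`. -/
lemma setIntegral_le_eq {Ω : Type*} [MeasurableSpace Ω] (P : Measure Ω) [IsProbabilityMeasure P]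
    (W : Ω → ℝ) (hW : Measurable W) (hW01 : ∀ᵐ ω ∂P, W ω ∈ Set.Icc (0 : ℝ) 1)
    (b : ℝ) (hb : 0 ≤ b) :
    ∫ ω in {ω | W ω ≤ b}, W ω ∂P
      = b * P.real {ω | W ω ≤ b} - ∫ t in (0 : ℝ)..b, P.real {ω | W ω ≤ t} := by
  have hS : MeasurableSet {ω | W ω ≤ b} := measurableSet_le hW measurable_const
  have hWi : Integrable W P := by
    refine Integrable.of_bound hW.aestronglyMeasurable 1 ?_
    filter_upwards [hW01] with ω h
    rw [Real.norm_eq_abs, abs_of_nonneg h.1]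
    exact h.2
  have hfi : Integrable (fun ω => b - W ω) P := (integrable_const b).sub hWi
  have key := Integrable.integral_eq_integral_Ioc_meas_le (M := b) (hfi.indicator hS)
    (Filter.Eventually.of_forall fun ω => by
      apply Set.indicator_nonneg
      intro ω (h : W ω ≤ b)
      linarith)
    (by
      filter_upwards [hW01] with ω h
      exact Set.indicator_apply_le' (fun _ => sub_le_self b h.1) (fun _ => hb))
  have hlevel : ∫ t in Set.Ioc 0 b, P.real {ω | t ≤ {ω | W ω ≤ b}.indicator (fun ω => b - W ω) ω}
      = ∫ t in (0 : ℝ)..b, P.real {ω | W ω ≤ t} := by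
    have hsub := intervalIntegral.integral_comp_sub_left (a := 0) (b := b)
      (fun t => P.real {ω | W ω ≤ t}) b
    rw [sub_self, sub_zero] at hsub
    rw [← hsub, intervalIntegral.integral_of_le hb]
    refine setIntegral_congr_fun measurableSet_Ioc fun t ht => ?_
    have : {ω | t ≤ {ω | W ω ≤ b}.indicator (fun ω => b - W ω) ω} = {ω | W ω ≤ b - t} := by
      ext ω
      have ht0 : 0 < t := ht.1
      by_cases h : W ω ≤ b
      · simp only [Set.indicator, Set.mem_ofPred_eq, h, if_true]
        constructor <;> intro _ <;> linarith
      · simp only [Set.indicator, Set.mem_ofPred_eq, h, if_false]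
        constructor <;> intro _ <;> linarith
    simp only [this]
  rw [hlevel, integral_indicator hS, integral_sub (integrable_const b).integrableOn
    hWi.integrableOn, setIntegral_const, smul_eq_mul] at key
  linarith

/-- tail lower bound on the clipped mass `E[W·1{W ≤ b}]`, and its sharpness
for the exact power-law CDF. -/
theorem stmt0 {Ω : Type*} [MeasurableSpace Ω] (P : Measure Ω) [IsProbabilityMeasure P]
    (W : Ω → ℝ) (hW : Measurable W)
    (hW01 : ∀ᵐ ω ∂P, W ω ∈ Set.Icc (0 : ℝ) 1)
    (C γ : ℝ) (hC : 1 ≤ C) (hγ : 1 < γ)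
    (htail : ∀ t ∈ Set.Icc (0 : ℝ) 1, (P {ω | W ω ≤ t}).toReal ≤ C * t ^ (γ - 1)) :
    (∀ b ∈ Set.Icc (0 : ℝ) 1,
        (γ - 1) / γ * C ^ (-(1 / (γ - 1))) * (P {ω | W ω ≤ b}).toReal ^ (γ / (γ - 1))
          ≤ ∫ ω in {ω | W ω ≤ b}, W ω ∂P) ∧
      ((∀ t ∈ Set.Icc (0 : ℝ) 1, (P {ω | W ω ≤ t}).toReal = t ^ (γ - 1)) →
        ∀ b ∈ Set.Icc (0 : ℝ) 1,
          ∫ ω in {ω | W ω ≤ b}, W ω ∂P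
            = (γ - 1) / γ * (P {ω | W ω ≤ b}).toReal ^ (γ / (γ - 1))) := by
  have hγ1 : 0 < γ - 1 := by linarith
  have hγ0 : 0 < γ := by linarith
  have hC0 : 0 < C := by linarith
  have hint : ∀ t : ℝ, ∫ s in (0 : ℝ)..t, s ^ (γ - 1) = t ^ γ / γ := fun t => by
    rw [integral_rpow (Or.inl (by linarith)), sub_add_cancel, Real.zero_rpow hγ0.ne', sub_zero]
  have hmul : ∀ t : ℝ, 0 ≤ t → t * t ^ (γ - 1) = t ^ γ := fun t ht => by
    rw [← Real.rpow_one_add' ht (by linarith)]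
    congr 1
    ring
  refine ⟨fun b hb => ?_, fun hF b hb => ?_⟩
  · rw [setIntegral_le_eq P W hW hW01 b hb.1]
    have hp := htail b hb
    change _ * P.real {ω | W ω ≤ b} ^ _ ≤ _
    change P.real {ω | W ω ≤ b} ≤ _ at hp
    set p := P.real {ω | W ω ≤ b} with hpdef
    have hp0 : 0 ≤ p := measureReal_nonneg
    -- `t` solves `C * t ^ (γ - 1) = p`
    obtain ⟨t, ht⟩ : ∃ t, t = (p / C) ^ (γ - 1)⁻¹ := ⟨_, rfl⟩
    have ht0 : 0 ≤ t := ht ▸ by positivity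
    have htp : C * t ^ (γ - 1) = p := by
      rw [ht, Real.rpow_inv_rpow (by positivity) hγ1.ne']
      field_simp
    have htb : t ≤ b := by
      rw [ht, Real.rpow_inv_le_iff_of_pos (by positivity) hb.1 hγ1, div_le_iff₀ hC0]
      linarith
    have h1 : ∫ s in (0 : ℝ)..t, P.real {ω | W ω ≤ s} ≤ t * p / γ := by
      have h := intervalIntegral.integral_mono_on ht0 (intervalIntegrable_cdf P W 0 t)
        ((intervalIntegral.intervalIntegrable_rpow' (by linarith)).const_mul C)
        (fun s hs => htail s ⟨hs.1, (hs.2.trans htb).trans hb.2⟩)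
      rw [intervalIntegral.integral_const_mul, hint, ← hmul t ht0] at h
      rw [← htp]
      exact h.trans_eq (by ring)
    have h2 : ∫ s in t..b, P.real {ω | W ω ≤ s} ≤ (b - t) * p := by
      have h := intervalIntegral.integral_mono_on htb (intervalIntegrable_cdf P W t b)
        (intervalIntegrable_const (c := p))
        (fun s hs => measureReal_mono (fun ω (h : W ω ≤ s) => h.trans hs.2))
      rwa [intervalIntegral.integral_const, smul_eq_mul] at h
    have hsum := intervalIntegral.integral_add_adjacent_intervals
      (intervalIntegrable_cdf P W 0 t) (intervalIntegrable_cdf P W t b)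
    have hrhs : C ^ (-(1 / (γ - 1))) * p ^ (γ / (γ - 1)) = t * p := by
      have he : γ / (γ - 1) = (γ - 1)⁻¹ + 1 := by field_simp; ring
      rw [he, Real.rpow_add_one' hp0 (by positivity), ht, Real.div_rpow hp0 hC0.le,
        Real.rpow_neg hC0.le, one_div]
      ring
    rw [mul_assoc, hrhs]
    have : (γ - 1) / γ * (t * p) = t * p - t * p / γ := by field_simp
    linarith
  · rw [setIntegral_le_eq P W hW hW01 b hb.1]
    have hI : ∫ s in (0 : ℝ)..b, P.real {ω | W ω ≤ s} = b ^ γ / γ := by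
      rw [← hint]
      refine intervalIntegral.integral_congr fun s hs => ?_
      rw [Set.uIcc_of_le hb.1] at hs
      exact hF s ⟨hs.1, hs.2.trans hb.2⟩
    rw [hI, measureReal_def, hF b hb, hmul b hb.1, ← Real.rpow_mul hb.1,
      mul_div_cancel₀ _ hγ1.ne']
    field_simp
end

section
/- Let W be a random variable on a probability space with values in (0,1] almost surely, and suppose P(W ≤ π) ≤ C·π^(γ₀−1) for all π ∈ [0,1], where C ≥ 1 and γ₀ > 2. Then 1/W is integrable and E[1/W] ≤ 1 + C/(γ₀ − 2). -/
/-!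
The layer-cake formula gives `E[1/W] = ∫₀^∞ P(1/W ≥ t) dt`. On `(0, 1]` the integrand is at
most `1`; for `t > 1`, `1/W ≥ t` forces `W ≤ t⁻¹`, so the tail bound makes the integrand at most
`C * t^(1-γ₀)`, whose integral over `(1, ∞)` is `C / (γ₀ - 2)`. Working with lower Lebesgue
integrals, this single bound yields both integrability and the estimate.
-/

open MeasureTheory

/-- under the `(C, γ₀)` tail bound with `γ₀ > 2`, the inverse propensity
`1/W` is integrable with `E[1/W] ≤ 1 + C/(γ₀ - 2)`. -/
theorem stmt3 {Ω : Type*} [MeasurableSpace Ω] (P : Measure Ω) [IsProbabilityMeasure P]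
    (W : Ω → ℝ) (hW : Measurable W)
    (hW01 : ∀ᵐ ω ∂P, W ω ∈ Set.Ioc (0 : ℝ) 1)
    (C γ₀ : ℝ) (hC : 1 ≤ C) (hγ : 2 < γ₀)
    (htail : ∀ π ∈ Set.Icc (0 : ℝ) 1, (P {ω | W ω ≤ π}).toReal ≤ C * π ^ (γ₀ - 1)) :
    Integrable (fun ω => 1 / W ω) P ∧ ∫ ω, 1 / W ω ∂P ≤ 1 + C / (γ₀ - 2) := by
  have hmeas : Measurable (fun ω => 1 / W ω) := measurable_const.div hW
  have hnn : 0 ≤ᵐ[P] fun ω => 1 / W ω := by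
    filter_upwards [hW01] with ω hω
    exact one_div_nonneg.mpr hω.1.le
  have hbound : 0 ≤ C / (γ₀ - 2) := div_nonneg (by linarith) (by linarith)
  have htop : ∫⁻ t in Set.Ioi (1 : ℝ), P {ω | t ≤ 1 / W ω} ≤ ENNReal.ofReal (C / (γ₀ - 2)) := by
    calc ∫⁻ t in Set.Ioi (1 : ℝ), P {ω | t ≤ 1 / W ω}
        ≤ ∫⁻ t in Set.Ioi (1 : ℝ), ENNReal.ofReal (C * t ^ (1 - γ₀)) := by
          refine setLIntegral_mono' measurableSet_Ioi fun t (ht : 1 < t) => ?_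
          have ht0 : 0 < t := by linarith
          have hsub : {ω | t ≤ 1 / W ω} ⊆ {ω | W ω ≤ t⁻¹} := by
            intro ω (hω : t ≤ 1 / W ω)
            have hpos : 0 < W ω := one_div_pos.mp (ht0.trans_le hω)
            rw [Set.mem_ofPred_eq, ← one_div]
            exact (le_one_div ht0 hpos).mp hω
          have hle := htail t⁻¹ ⟨by positivity, inv_le_one_of_one_le₀ ht.le⟩
          rw [Real.inv_rpow ht0.le, ← Real.rpow_neg ht0.le, neg_sub] at hle
          exact (measure_mono hsub).trans
            ((ENNReal.le_ofReal_iff_toReal_le (measure_ne_top _ _)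
              (by positivity)).mpr hle)
      _ = ENNReal.ofReal (∫ t in Set.Ioi (1 : ℝ), C * t ^ (1 - γ₀)) := by
          refine (ofReal_integral_eq_lintegral_ofReal
            ((integrableOn_Ioi_rpow_of_lt (by linarith) zero_lt_one).const_mul C) ?_).symm
          refine ae_restrict_of_forall_mem measurableSet_Ioi fun t (ht : 1 < t) => ?_
          have ht0 : 0 < t := by linarith
          change 0 ≤ C * t ^ (1 - γ₀)
          positivity
      _ = ENNReal.ofReal (C / (γ₀ - 2)) := by
          rw [integral_const_mul, integral_Ioi_rpow_of_lt (by linarith) zero_lt_one,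
            Real.one_rpow, show 1 - γ₀ + 1 = -(γ₀ - 2) by ring, neg_div_neg_eq, mul_one_div]
  have hkey : ∫⁻ ω, ENNReal.ofReal (1 / W ω) ∂P ≤ ENNReal.ofReal (1 + C / (γ₀ - 2)) := by
    rw [lintegral_eq_lintegral_meas_le P hnn hmeas.aemeasurable,
      ← Set.Ioc_union_Ioi_eq_Ioi (zero_le_one' ℝ),
      lintegral_union measurableSet_Ioi (Set.Ioc_disjoint_Ioi le_rfl),
      ENNReal.ofReal_add zero_le_one hbound]
    refine add_le_add ?_ htop
    calc ∫⁻ t in Set.Ioc (0 : ℝ) 1, P {ω | t ≤ 1 / W ω}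
        ≤ ∫⁻ _ in Set.Ioc (0 : ℝ) 1, 1 := lintegral_mono fun t => prob_le_one
      _ = ENNReal.ofReal 1 := by simp
  refine ⟨⟨hmeas.aestronglyMeasurable, ?_⟩, ?_⟩
  · rw [hasFiniteIntegral_iff_ofReal hnn]
    exact hkey.trans_lt ENNReal.ofReal_lt_top
  · rw [integral_eq_lintegral_of_nonneg_ae hnn hmeas.aestronglyMeasurable]
    exact ENNReal.toReal_le_of_le_ofReal (by linarith) hkey
end

section
/- Let W be a random variable on a probability space with values in (0,1] almost surely, and suppose there are constants C' > 0 and γ₀ ∈ (1,2) such that P(W ≤ π) ≥ C'·π^(γ₀−1) for all π ∈ (0,1]. Then 1/W is not integrable; that is, ∫ (1/W) dP = ∞. -/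
/-! Markov's inequality applied to `1 / W` at the level `t = 1 / π` gives
`E[1 / W] ≥ t * P (W ≤ 1 / t) ≥ C' * t ^ (2 - γ₀)` for every `t ≥ 1`. Since `γ₀ < 2`, the right-hand
side is unbounded as `t → ∞`, so the expectation is infinite. -/

open MeasureTheory

/-- under a power-law lower tail bound with `γ₀ ∈ (1,2)`, the inverse
propensity `1/W` is not integrable; its (nonnegative) integral is infinite. -/
theorem stmt4 {Ω : Type*} [MeasurableSpace Ω] (P : Measure Ω) [IsProbabilityMeasure P]
    (W : Ω → ℝ) (hW : Measurable W)
    (hW01 : ∀ᵐ ω ∂P, W ω ∈ Set.Ioc (0 : ℝ) 1)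
    (C' γ₀ : ℝ) (hC' : 0 < C') (hγ : γ₀ ∈ Set.Ioo (1 : ℝ) 2)
    (htail : ∀ π ∈ Set.Ioc (0 : ℝ) 1, C' * π ^ (γ₀ - 1) ≤ (P {ω | W ω ≤ π}).toReal) :
    ¬ Integrable (fun ω => 1 / W ω) P ∧
      ∫⁻ ω, ENNReal.ofReal (1 / W ω) ∂P = ⊤ := by
  have htop : ∫⁻ ω, ENNReal.ofReal (1 / W ω) ∂P = ⊤ := by
    by_contra hfin
    set I := ∫⁻ ω, ENNReal.ofReal (1 / W ω) ∂P with hI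
    have hmeas : Measurable fun ω => ENNReal.ofReal (1 / W ω) :=
      (measurable_const.div hW).ennreal_ofReal
    have hbound : ∀ t : ℝ, 1 ≤ t → C' * t ^ (2 - γ₀) ≤ I.toReal := by
      intro t ht
      have ht0 : 0 < t := by linarith
      have hmono : P {ω | W ω ≤ 1 / t} ≤
          P {ω | ENNReal.ofReal t ≤ ENNReal.ofReal (1 / W ω)} := by
        refine measure_mono_ae ?_
        filter_upwards [hW01] with ω hω hle
        exact ENNReal.ofReal_le_ofReal ((le_one_div hω.1 ht0).1 hle)
      have hmarkov : ENNReal.ofReal t * P {ω | W ω ≤ 1 / t} ≤ I :=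
        (mul_le_mul_right hmono _).trans (mul_meas_ge_le_lintegral hmeas _)
      have hreal := ENNReal.toReal_mono hfin hmarkov
      rw [ENNReal.toReal_mul, ENNReal.toReal_ofReal ht0.le] at hreal
      have hpow : t ^ (2 - γ₀) = t * (1 / t) ^ (γ₀ - 1) := by
        rw [one_div, Real.inv_rpow ht0.le, ← Real.rpow_neg ht0.le,
          ← Real.rpow_one_add' ht0.le (by linarith [hγ.2])]
        congr 1
        ring
      have htail' := htail (1 / t) ⟨by positivity, (div_le_one ht0).2 ht⟩
      calc C' * t ^ (2 - γ₀) = t * (C' * (1 / t) ^ (γ₀ - 1)) := by rw [hpow]; ring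
        _ ≤ t * (P {ω | W ω ≤ 1 / t}).toReal := by gcongr
        _ ≤ I.toReal := hreal
    have hlim : Filter.Tendsto (fun t : ℝ => C' * t ^ (2 - γ₀)) Filter.atTop Filter.atTop :=
      (tendsto_rpow_atTop (by linarith [hγ.2])).const_mul_atTop hC'
    obtain ⟨t, ht, ht1⟩ :=
      ((hlim.eventually_gt_atTop I.toReal).and (Filter.eventually_ge_atTop 1)).exists
    exact absurd (hbound t ht1) (not_le.2 ht)
  exact ⟨fun hint => hint.lintegral_lt_top.ne htop, htop⟩
end

section
/- Let W be a random variable on a probability space with values in (0,1] almost surely, suppose P(W ≤ t) ≤ C·t^(γ−1) for all t ∈ [0,1] with C ≥ 1 and γ > 1, suppose E[W] ≥ π for some π ∈ (0,1], and let b satisfy 0 < b ≤ π/2. With c(γ) = ((γ−1)/γ)·C^(−1/(γ−1)), one has E[ W / max(W, b)² ] ≥ c(γ)·b^(−2)·P(W ≤ b)^(γ/(γ−1)) + π/2. -/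
/-!
On `{W ≤ b}` the integrand is `W / b²`; on `{W > b}` it is `1 / W ≥ W`. Hence almost surely
`W / max(W,b)² ≥ b⁻² · W 1_{W ≤ b} + W - b`, and integrating gives the `π / 2` term from
`π - b ≥ π / 2`. What remains is a bathtub estimate (`truncated_mean_ge`) for the truncated mean:
with `p = P(W ≤ b)` and `s` the solution of `C s^(γ-1) = p`, the layer-cake formula yields
`E[W 1_{W ≤ b}] ≥ ∫₀ˢ (p - P(W ≤ t)) dt ≥ ∫₀ˢ (p - C t^(γ-1)) dt = p s (1 - 1/γ)`,
which is `c(γ) p^(γ/(γ-1))`.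
-/

open MeasureTheory

/-- The bathtub bound: among laws obeying the tail bound, the mass of `{W ≤ b}` has the least
mean when it is packed as close to `0` as the tail bound allows. -/
lemma truncated_mean_ge {Ω : Type*} [MeasurableSpace Ω] (P : Measure Ω) [IsProbabilityMeasure P]
    (W : Ω → ℝ) (hW : Measurable W)
    (hW01 : ∀ᵐ ω ∂P, W ω ∈ Set.Ioc (0 : ℝ) 1)
    (C γ : ℝ) (hC : 1 ≤ C) (hγ : 1 < γ)
    (htail : ∀ t ∈ Set.Icc (0 : ℝ) 1, P.real {ω | W ω ≤ t} ≤ C * t ^ (γ - 1))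
    (b : ℝ) :
    (γ - 1) / γ * C ^ (-(1 / (γ - 1))) * P.real {ω | W ω ≤ b} ^ (γ / (γ - 1))
      ≤ ∫ ω, {ω | W ω ≤ b}.indicator W ω ∂P := by
  set A := {ω | W ω ≤ b} with hA
  have mA : MeasurableSet A := measurableSet_le hW measurable_const
  set p := P.real A with hp
  have hp0 : 0 ≤ p := measureReal_nonneg
  have hp1 : p ≤ 1 := measureReal_le_one
  have hg : 0 < γ - 1 := by linarith
  have hC0 : 0 < C := by linarith
  set s := (p / C) ^ (1 / (γ - 1)) with hs
  have hs0 : 0 ≤ s := by positivity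
  have hs1 : s ≤ 1 := Real.rpow_le_one (by positivity)
    (by rw [div_le_one hC0]; linarith) (by positivity)
  have hCs : C * s ^ (γ - 1) = p := by
    rw [hs, ← Real.rpow_mul (by positivity), one_div_mul_cancel hg.ne', Real.rpow_one]
    field_simp
  have hsg : s ^ γ = s * s ^ (γ - 1) := by
    have := Real.rpow_add_of_nonneg hs0 zero_le_one hg.le
    rwa [Real.rpow_one, add_sub_cancel] at this
  have hval : (γ - 1) / γ * C ^ (-(1 / (γ - 1))) * p ^ (γ / (γ - 1))
      = ∫ t in (0 : ℝ)..s, (p - C * t ^ (γ - 1)) := by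
    have hint : IntervalIntegrable (fun t : ℝ => C * t ^ (γ - 1)) volume 0 s :=
      (intervalIntegral.intervalIntegrable_rpow' (by linarith)).const_mul C
    rw [intervalIntegral.integral_sub (by simp) hint, intervalIntegral.integral_const,
      intervalIntegral.integral_const_mul, integral_rpow (Or.inl (by linarith))]
    have e1 : γ / (γ - 1) = 1 + 1 / (γ - 1) := by field_simp; ring
    rw [e1, Real.rpow_add_of_nonneg hp0 zero_le_one (by positivity), Real.rpow_one,
      sub_add_cancel, Real.zero_rpow (by linarith), hsg]
    have e2 : s = p ^ (1 / (γ - 1)) * C ^ (-(1 / (γ - 1))) := by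
      rw [hs, Real.div_rpow hp0 hC0.le, Real.rpow_neg hC0.le]; rfl
    have e3 : C * ((s * s ^ (γ - 1) - 0) / γ) = s * p / γ := by rw [← hCs]; ring
    rw [e3, e2, smul_eq_mul]
    field_simp
    ring
  have hWi : Integrable W P := Integrable.of_mem_Icc 0 1 hW.aemeasurable
    (hW01.mono fun ω h => ⟨h.1.le, h.2⟩)
  -- Capping at `s` makes the layer-cake integral run over `(0, s]` exactly.
  set f : Ω → ℝ := A.indicator fun ω => min (W ω) s with hf
  have hmf : Measurable f := (hW.min measurable_const).indicator mA
  have hf0 : 0 ≤ᵐ[P] f := by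
    filter_upwards [hW01] with ω h
    exact Set.indicator_apply_nonneg fun _ => le_min h.1.le hs0
  have hfs : f ≤ᵐ[P] fun _ => s := by
    filter_upwards with ω
    exact Set.indicator_apply_le' (fun _ => min_le_right _ _) fun _ => hs0
  have hfi : Integrable f P := Integrable.of_mem_Icc 0 s hmf.aemeasurable (by
    filter_upwards [hf0, hfs] with ω h1 h2 using ⟨h1, h2⟩)
  rw [hval, intervalIntegral.integral_of_le hs0]
  calc ∫ t in Set.Ioc 0 s, (p - C * t ^ (γ - 1))
      ≤ ∫ t in Set.Ioc 0 s, P.real {ω | t ≤ f ω} := by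
        refine setIntegral_mono_on ?_ ?_ measurableSet_Ioc ?_
        · rw [← intervalIntegrable_iff_integrableOn_Ioc_of_le hs0]
          exact (by simp : IntervalIntegrable (fun _ : ℝ => p) volume 0 s).sub
            ((intervalIntegral.intervalIntegrable_rpow' (by linarith)).const_mul C)
        · have : Antitone fun t : ℝ => P.real {ω | t ≤ f ω} := fun t u htu =>
            measureReal_mono fun ω (h : u ≤ f ω) => htu.trans h
          rw [← intervalIntegrable_iff_integrableOn_Ioc_of_le hs0]
          exact this.intervalIntegrable
        · intro t ht
          have h1 : p - P.real {ω | W ω ≤ t} ≤ P.real (A \ {ω | W ω ≤ t}) :=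
            le_measureReal_sdiff
          have h2 : P.real (A \ {ω | W ω ≤ t}) ≤ P.real {ω | t ≤ f ω} := by
            refine measureReal_mono ?_
            rintro ω ⟨ha, hn⟩
            simp only [Set.mem_ofPred_eq, not_le] at hn ⊢
            rw [hf, Set.indicator_of_mem ha]
            exact le_min hn.le ht.2
          linarith [htail t ⟨ht.1.le, ht.2.trans hs1⟩]
    _ = ∫ ω, f ω ∂P := (hfi.integral_eq_integral_Ioc_meas_le hf0 hfs).symm
    _ ≤ ∫ ω, A.indicator W ω ∂P := by
        refine integral_mono hfi (hWi.indicator mA) fun ω => ?_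
        exact Set.indicator_le_indicator (min_le_left _ _)

/-- lower bound on the clipped inverse-propensity second moment,
`E[W / max(W,b)²] ≥ c(γ)·b⁻²·P(W ≤ b)^(γ/(γ-1)) + π/2`. -/
theorem stmt5 {Ω : Type*} [MeasurableSpace Ω] (P : Measure Ω) [IsProbabilityMeasure P]
    (W : Ω → ℝ) (hW : Measurable W)
    (hW01 : ∀ᵐ ω ∂P, W ω ∈ Set.Ioc (0 : ℝ) 1)
    (C γ : ℝ) (hC : 1 ≤ C) (hγ : 1 < γ)
    (htail : ∀ t ∈ Set.Icc (0 : ℝ) 1, (P {ω | W ω ≤ t}).toReal ≤ C * t ^ (γ - 1))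
    (π : ℝ) (hπ : π ∈ Set.Ioc (0 : ℝ) 1)
    (hmean : π ≤ ∫ ω, W ω ∂P)
    (b : ℝ) (hb : 0 < b) (hbπ : b ≤ π / 2) :
    (γ - 1) / γ * C ^ (-(1 / (γ - 1))) * (P {ω | W ω ≤ b}).toReal ^ (γ / (γ - 1)) / b ^ 2
        + π / 2
      ≤ ∫ ω, W ω / (max (W ω) b) ^ 2 ∂P := by
  have key := truncated_mean_ge P W hW hW01 C γ hC hγ htail b
  rw [measureReal_def] at key
  have mA : MeasurableSet {ω | W ω ≤ b} := measurableSet_le hW measurable_const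
  have hWi : Integrable W P := Integrable.of_mem_Icc 0 1 hW.aemeasurable
    (hW01.mono fun ω h => ⟨h.1.le, h.2⟩)
  have hAi := (hWi.indicator mA).div_const (b ^ 2)
  have hi : Integrable (fun ω => W ω / (max (W ω) b) ^ 2) P := by
    refine Integrable.of_mem_Icc 0 (1 / b ^ 2)
      (hW.div ((hW.max measurable_const).pow_const 2)).aemeasurable ?_
    filter_upwards [hW01] with ω h
    refine ⟨div_nonneg h.1.le (sq_nonneg _), ?_⟩
    have := h.2
    gcongr
    exact le_max_right _ _
  have hbi : Integrable (fun ω => W ω - b) P := hWi.sub (integrable_const b)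
  have hmono : ∫ ω, ({ω | W ω ≤ b}.indicator W ω / b ^ 2 + (W ω - b)) ∂P
      ≤ ∫ ω, W ω / (max (W ω) b) ^ 2 ∂P := by
    refine integral_mono_ae (hAi.add hbi) hi ?_
    filter_upwards [hW01] with ω h
    by_cases hω : W ω ≤ b
    · have hm : ω ∈ {ω | W ω ≤ b} := hω
      simp only [Set.indicator_of_mem hm, max_eq_right hω]
      linarith
    · have hm : ω ∉ {ω | W ω ≤ b} := hω
      simp only [Set.indicator_of_notMem hm, max_eq_left (not_le.1 hω).le]
      have h1 : W ω ≤ W ω / W ω ^ 2 :=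
        le_div_self h.1.le (pow_pos h.1 2) (pow_le_one₀ h.1.le h.2)
      rw [zero_div]
      linarith
  rw [integral_add hAi hbi,
    integral_sub hWi (integrable_const b), integral_div] at hmono
  simp only [integral_const, probReal_univ, one_smul] at hmono
  have := div_le_div_of_nonneg_right key (sq_nonneg b)
  linarith
end

section
/- Let W be a random variable on a probability space with values in (0,1] almost surely, suppose P(W ≤ t) ≤ C·t^(γ₀−1) for all t ∈ [0,1] with C ≥ 1 and γ₀ > 1, and let b ∈ (0,1]. With c(γ₀) = ((γ₀−1)/γ₀)·C^(−1/(γ₀−1)), one has E[ W / max(W, b)² ] ≥ 1 − ( b²·(γ₀−1)/c(γ₀) )^(γ₀−1) · γ₀^(−γ₀). -/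
/-!
With `a = b²`, the right-hand correction term simplifies to `C · a ^ (γ₀ - 1) / γ₀`
(`stmt6_const`). Pointwise `W / max(W, b)² ≥ min(1, W / a) = 1 - g` with
`g = max(0, 1 - W / a)`: below `b` the left side is `W / a`, above `b` it is `1 / W ≥ 1`.
The layer-cake formula and the tail bound at `a (1 - t)` then give
`E[g] = ∫₀¹ P(W ≤ a (1 - t)) dt ≤ C a ^ (γ₀ - 1) ∫₀¹ (1 - t) ^ (γ₀ - 1) dt = C a ^ (γ₀ - 1) / γ₀`.
-/

open MeasureTheory

lemma stmt6_const (a C γ₀ : ℝ) (ha : 0 < a) (hC : 0 < C) (hγ : 1 < γ₀) :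
    (a * (γ₀ - 1) / ((γ₀ - 1) / γ₀ * C ^ (-(1 / (γ₀ - 1))))) ^ (γ₀ - 1) * γ₀ ^ (-γ₀)
      = C * a ^ (γ₀ - 1) / γ₀ := by
  have h1 : 0 < γ₀ - 1 := by linarith
  have h0 : 0 < γ₀ := by linarith
  have hCp : 0 < C ^ (1 / (γ₀ - 1)) := Real.rpow_pos_of_pos hC _
  have e : a * (γ₀ - 1) / ((γ₀ - 1) / γ₀ * C ^ (-(1 / (γ₀ - 1))))
      = a * γ₀ * C ^ (1 / (γ₀ - 1)) := by
    rw [Real.rpow_neg hC.le]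
    field_simp
  rw [e, Real.mul_rpow (by positivity) hCp.le, Real.mul_rpow ha.le h0.le, ← Real.rpow_mul hC.le,
    one_div_mul_cancel h1.ne', Real.rpow_one, Real.rpow_neg h0.le, Real.rpow_sub_one h0.ne']
  have : 0 < γ₀ ^ γ₀ := Real.rpow_pos_of_pos h0 _
  field_simp

lemma stmt6_integral (K γ₀ : ℝ) (hγ : 1 < γ₀) :
    ∫ t in Set.Ioc (0 : ℝ) 1, K * (1 - t) ^ (γ₀ - 1) = K / γ₀ := by
  rw [← intervalIntegral.integral_of_le zero_le_one, intervalIntegral.integral_const_mul,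
    intervalIntegral.integral_comp_sub_left (fun x : ℝ => x ^ (γ₀ - 1)) 1,
    integral_rpow (Or.inl (by linarith))]
  have h0 : γ₀ ≠ 0 := by linarith
  simp [Real.zero_rpow h0, div_eq_mul_inv]

lemma stmt6_pointwise {w b : ℝ} (hw : w ∈ Set.Ioc (0 : ℝ) 1) (hb : b ∈ Set.Ioc (0 : ℝ) 1) :
    1 - max 0 (1 - w / b ^ 2) ≤ w / (max w b) ^ 2 := by
  obtain ⟨hw0, hw1⟩ := hw
  obtain ⟨hb0, hb1⟩ := hb
  rcases le_total w b with h | h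
  · rw [max_eq_right h]
    linarith [le_max_right 0 (1 - w / b ^ 2)]
  · rw [max_eq_left h]
    have : 1 ≤ w / w ^ 2 := by
      rw [le_div_iff₀ (by positivity)]
      nlinarith
    linarith [le_max_left 0 (1 - w / b ^ 2)]

/-- the clipped inverse-propensity second moment is bounded away from
zero: `E[W/max(W,b)²] ≥ 1 − (b²·(γ₀−1)/c(γ₀))^(γ₀−1)·γ₀^(−γ₀)`. -/
theorem stmt6 {Ω : Type*} [MeasurableSpace Ω] (P : Measure Ω) [IsProbabilityMeasure P]
    (W : Ω → ℝ) (hW : Measurable W)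
    (hW01 : ∀ᵐ ω ∂P, W ω ∈ Set.Ioc (0 : ℝ) 1)
    (C γ₀ : ℝ) (hC : 1 ≤ C) (hγ : 1 < γ₀)
    (htail : ∀ t ∈ Set.Icc (0 : ℝ) 1, (P {ω | W ω ≤ t}).toReal ≤ C * t ^ (γ₀ - 1))
    (b : ℝ) (hb : b ∈ Set.Ioc (0 : ℝ) 1) :
    1 - (b ^ 2 * (γ₀ - 1) / ((γ₀ - 1) / γ₀ * C ^ (-(1 / (γ₀ - 1))))) ^ (γ₀ - 1)
          * γ₀ ^ (-γ₀)
      ≤ ∫ ω, W ω / (max (W ω) b) ^ 2 ∂P := by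
  have hb0 : 0 < b := hb.1
  have ha : 0 < b ^ 2 := by positivity
  have ha1 : b ^ 2 ≤ 1 := pow_le_one₀ hb0.le hb.2
  rw [stmt6_const (b ^ 2) C γ₀ ha (by linarith) hγ]
  set a := b ^ 2 with hadef
  set g : Ω → ℝ := fun ω => max 0 (1 - W ω / a) with hg
  have hgm : Measurable g := by fun_prop
  have hg0 : 0 ≤ᵐ[P] g := Filter.Eventually.of_forall fun ω => le_max_left _ _
  have hg1 : g ≤ᵐ[P] fun _ => (1 : ℝ) := by
    filter_upwards [hW01] with ω h
    have : 0 ≤ W ω / a := div_nonneg h.1.le ha.le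
    exact max_le zero_le_one (by linarith)
  have hgi : Integrable g P := by
    refine Integrable.of_bound hgm.aestronglyMeasurable 1 ?_
    filter_upwards [hg0, hg1] with ω h0 h1
    rw [Real.norm_of_nonneg h0]
    exact h1
  have hfi : Integrable (fun ω => W ω / (max (W ω) b) ^ 2) P := by
    refine Integrable.of_bound
      (hW.div ((hW.max measurable_const).pow_const 2)).aestronglyMeasurable (1 / a) ?_
    filter_upwards [hW01] with ω h
    rw [Real.norm_of_nonneg (div_nonneg h.1.le (sq_nonneg _))]
    exact div_le_div₀ zero_le_one h.2 ha (pow_le_pow_left₀ hb0.le (le_max_right _ _) 2)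
  have hgE : ∫ ω, g ω ∂P ≤ C * a ^ (γ₀ - 1) / γ₀ := by
    rw [hgi.integral_eq_integral_Ioc_meas_le hg0 hg1, ← stmt6_integral _ γ₀ hγ]
    refine integral_mono_of_nonneg (Filter.Eventually.of_forall fun t => measureReal_nonneg) ?_ ?_
    · have hc : Continuous fun t : ℝ => C * a ^ (γ₀ - 1) * (1 - t) ^ (γ₀ - 1) :=
        continuous_const.mul
          ((continuous_const.sub continuous_id).rpow_const fun _ => Or.inr (by linarith))
      exact hc.integrableOn_Ioc
    · refine (ae_restrict_iff' measurableSet_Ioc).2 (Filter.Eventually.of_forall fun t ht => ?_)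
      have ht1 : 0 ≤ 1 - t := by linarith [ht.2]
      have hset : {ω | t ≤ g ω} = {ω | W ω ≤ a * (1 - t)} := by
        ext ω
        -- `t > 0` excludes the branch `0` of the maximum.
        simp only [hg, Set.mem_ofPred_eq, le_max_iff, not_le.2 ht.1, false_or]
        rw [le_sub_comm, div_le_iff₀' ha]
      have h := htail (a * (1 - t)) ⟨by positivity, by nlinarith [ht.1]⟩
      rw [Real.mul_rpow ha.le ht1, ← mul_assoc] at h
      simpa only [hset, Measure.real] using h
  calc 1 - C * a ^ (γ₀ - 1) / γ₀ ≤ 1 - ∫ ω, g ω ∂P := by linarith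
    _ = ∫ ω, (1 - g ω) ∂P := by
        rw [integral_sub (integrable_const _) hgi]
        simp
    _ ≤ _ := by
        refine integral_mono_ae ((integrable_const _).sub hgi) hfi ?_
        filter_upwards [hW01] with ω h
        exact stmt6_pointwise h hb
end

section
/- Let W be a random variable on a probability space with values in (0,1] almost surely, suppose P(W ≤ π) ≤ C·π^(γ₀−1) for all π ∈ [0,1] with C ≥ 1 and γ₀ > 1, and let b ∈ (0,1]. Then E[ W / max(W, b)² ] ≤ 1 + C·(1 − b^(γ₀−2))/(γ₀ − 2) when γ₀ ≠ 2, and E[ W / max(W, b)² ] ≤ 1 + C·log(1/b) when γ₀ = 2. -/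
/-!
Since `0 < W ≤ 1`, the integrand is at most `1 / max(W, b)`, and the fundamental theorem of calculus
gives `1 / max(W, b) = 1 + ∫_{max(W, b)}^1 t⁻² dt ≤ 1 + ∫_b^1 1{W ≤ t} t⁻² dt`
(`clipped_le_layer`). Taking expectations and exchanging the integrals (`expectation_layer`) turns
the right side into `1 + ∫_b^1 P(W ≤ t) t⁻² dt`, which the tail bound controls by
`1 + C ∫_b^1 t^(γ₀ - 3) dt` (`clipped_le_rpow`). The two cases of the theorem are the two values of
the last integral.
-/

open MeasureTheory

/-- The integrand `1{w ≤ t} t⁻²` of the layer-cake representation of `1 / max(w, b)`. -/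
noncomputable def layer (w t : ℝ) : ℝ := if w ≤ t then (t ^ 2)⁻¹ else 0

lemma layer_nonneg (w t : ℝ) : 0 ≤ layer w t := by
  unfold layer; split_ifs <;> positivity

lemma measurable_layer : Measurable (fun p : ℝ × ℝ => layer p.1 p.2) := by
  unfold layer
  exact Measurable.ite (measurableSet_le measurable_fst measurable_snd)
    (by fun_prop) measurable_const

lemma layer_le {b t : ℝ} (hb : 0 < b) (ht : b ≤ t) (w : ℝ) : layer w t ≤ (b ^ 2)⁻¹ := by
  unfold layer
  split_ifs
  · gcongr
  · positivity

lemma integrable_layer {Ω : Type*} [MeasurableSpace Ω] (P : Measure Ω) [IsProbabilityMeasure P]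
    (W : Ω → ℝ) (hW : Measurable W) {b : ℝ} (hb : 0 < b) :
    Integrable (fun p : Ω × ℝ => layer (W p.1) p.2)
      (P.prod (volume.restrict (Set.Ioc b 1))) := by
  have hm : Measurable (fun p : Ω × ℝ => layer (W p.1) p.2) :=
    measurable_layer.comp ((hW.comp measurable_fst).prodMk measurable_snd)
  refine Integrable.of_bound hm.aestronglyMeasurable (b ^ 2)⁻¹ ?_
  have h : ∀ᵐ t ∂(volume.restrict (Set.Ioc b 1)), t ∈ Set.Ioc b 1 :=
    ae_restrict_mem measurableSet_Ioc
  filter_upwards [Measure.quasiMeasurePreserving_snd.ae h] with p hp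
  rw [Real.norm_of_nonneg (layer_nonneg _ _)]
  exact layer_le hb hp.1.le _

lemma integral_inv_sq {m : ℝ} (hm : 0 < m) (hm1 : m ≤ 1) :
    ∫ t in Set.Ioc m 1, (t ^ 2)⁻¹ = m⁻¹ - 1 := by
  rw [← intervalIntegral.integral_of_le hm1]
  have h0 : (0 : ℝ) ∉ Set.uIcc m 1 := by
    rw [Set.uIcc_of_le hm1]; exact fun h => absurd h.1 (not_le.2 hm)
  have h := integral_zpow (a := m) (b := 1) (n := -2) (Or.inr ⟨by norm_num, h0⟩)
  have e : ∀ t : ℝ, (t ^ 2)⁻¹ = t ^ (-2 : ℤ) := fun t => by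
    rw [zpow_neg]; norm_cast
  simp_rw [e, h]
  norm_num
  ring

lemma clipped_le_layer {w b : ℝ} (hw : w ∈ Set.Ioc (0 : ℝ) 1) (hb : b ∈ Set.Ioc (0 : ℝ) 1) :
    w / (max w b) ^ 2 ≤ 1 + ∫ t in Set.Ioc b 1, layer w t := by
  have hm : 0 < max w b := lt_max_of_lt_left hw.1
  have h1 : w / (max w b) ^ 2 ≤ (max w b)⁻¹ := by
    rw [div_le_iff₀ (by positivity), pow_two, inv_mul_cancel_left₀ hm.ne']
    exact le_max_left _ _
  have h2 : ∫ t in Set.Ioc (max w b) 1, layer w t = (max w b)⁻¹ - 1 := by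
    rw [← integral_inv_sq hm (max_le hw.2 hb.2)]
    refine setIntegral_congr_fun measurableSet_Ioc fun t ht => ?_
    exact if_pos ((le_max_left _ _).trans ht.1.le)
  have hi : IntegrableOn (layer w) (Set.Ioc b 1) := by
    refine Integrable.of_bound
      (measurable_layer.comp measurable_prodMk_left).aestronglyMeasurable (b ^ 2)⁻¹ ?_
    filter_upwards [ae_restrict_mem measurableSet_Ioc] with t ht
    rw [Real.norm_of_nonneg (layer_nonneg _ _)]
    exact layer_le hb.1 ht.1.le _
  have h3 : ∫ t in Set.Ioc (max w b) 1, layer w t ≤ ∫ t in Set.Ioc b 1, layer w t :=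
    setIntegral_mono_set hi (Filter.Eventually.of_forall fun t => layer_nonneg w t)
      (Set.Ioc_subset_Ioc_left (le_max_right _ _)).eventuallyLE
  linarith

lemma expectation_layer {Ω : Type*} [MeasurableSpace Ω] (P : Measure Ω)
    (W : Ω → ℝ) (hW : Measurable W) (t : ℝ) :
    ∫ ω, layer (W ω) t ∂P = (P {ω | W ω ≤ t}).toReal * (t ^ 2)⁻¹ := by
  have hs : MeasurableSet {ω | W ω ≤ t} := measurableSet_le hW measurable_const
  have : (fun ω => layer (W ω) t) = {ω | W ω ≤ t}.indicator (fun _ => (t ^ 2)⁻¹) := by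
    ext ω; simp [layer, Set.indicator_apply]
  rw [this, integral_indicator_const _ hs]
  rfl

/-- The common form of both cases: the second moment is at most `1 + C ∫_b^1 t^(γ₀ - 3) dt`. -/
lemma clipped_le_rpow {Ω : Type*} [MeasurableSpace Ω] (P : Measure Ω) [IsProbabilityMeasure P]
    (W : Ω → ℝ) (hW : Measurable W) (hW01 : ∀ᵐ ω ∂P, W ω ∈ Set.Ioc (0 : ℝ) 1) (C γ₀ : ℝ)
    (htail : ∀ π ∈ Set.Icc (0 : ℝ) 1, (P {ω | W ω ≤ π}).toReal ≤ C * π ^ (γ₀ - 1))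
    (b : ℝ) (hb : b ∈ Set.Ioc (0 : ℝ) 1) :
    ∫ ω, W ω / (max (W ω) b) ^ 2 ∂P ≤ 1 + C * ∫ t in b..1, t ^ (γ₀ - 3) := by
  have hI := integrable_layer P W hW hb.1
  have h0 : (0 : ℝ) ∉ Set.uIcc b 1 := by
    rw [Set.uIcc_of_le hb.2]; exact fun h => absurd h.1 (not_le.2 hb.1)
  have hr : IntegrableOn (fun t : ℝ => C * t ^ (γ₀ - 3)) (Set.Ioc b 1) :=
    ((intervalIntegral.intervalIntegrable_rpow (Or.inr h0)).const_mul C).1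
  calc ∫ ω, W ω / (max (W ω) b) ^ 2 ∂P
      ≤ ∫ ω, (1 + ∫ t in Set.Ioc b 1, layer (W ω) t) ∂P := by
        refine integral_mono_of_nonneg ?_ ((integrable_const _).add hI.integral_prod_left) ?_
        · filter_upwards [hW01] with ω hω
          exact div_nonneg hω.1.le (sq_nonneg _)
        · filter_upwards [hW01] with ω hω using clipped_le_layer hω hb
    _ = 1 + ∫ ω, (∫ t in Set.Ioc b 1, layer (W ω) t) ∂P := by
        rw [integral_add (integrable_const _) hI.integral_prod_left]
        simp
    _ = 1 + ∫ t in Set.Ioc b 1, (∫ ω, layer (W ω) t ∂P) := by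
        rw [integral_integral_swap hI]
    _ ≤ 1 + ∫ t in Set.Ioc b 1, C * t ^ (γ₀ - 3) := by
        gcongr 1 + ?_
        refine setIntegral_mono_on hI.integral_prod_right hr measurableSet_Ioc fun t ht => ?_
        have ht0 : 0 < t := hb.1.trans ht.1
        rw [expectation_layer P W hW]
        have e : t ^ (γ₀ - 3) = t ^ (γ₀ - 1) * (t ^ 2)⁻¹ := by
          rw [← Real.rpow_natCast, ← Real.rpow_neg ht0.le, ← Real.rpow_add ht0]
          congr 1; push_cast; ring
        rw [e, ← mul_assoc]
        gcongr
        exact htail t ⟨ht0.le, ht.2⟩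
    _ = 1 + C * ∫ t in b..1, t ^ (γ₀ - 3) := by
        rw [integral_const_mul, intervalIntegral.integral_of_le hb.2]



/-- upper bound on the clipped inverse-propensity second moment under the
`(C, γ₀)` tail bound: `1 + C(1 − b^(γ₀−2))/(γ₀−2)` for `γ₀ ≠ 2`, and `1 + C·log(1/b)`
for `γ₀ = 2`. -/
theorem stmt7 {Ω : Type*} [MeasurableSpace Ω] (P : Measure Ω) [IsProbabilityMeasure P]
    (W : Ω → ℝ) (hW : Measurable W)
    (hW01 : ∀ᵐ ω ∂P, W ω ∈ Set.Ioc (0 : ℝ) 1)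
    (C γ₀ : ℝ) (hC : 1 ≤ C) (hγ : 1 < γ₀)
    (htail : ∀ π ∈ Set.Icc (0 : ℝ) 1, (P {ω | W ω ≤ π}).toReal ≤ C * π ^ (γ₀ - 1))
    (b : ℝ) (hb : b ∈ Set.Ioc (0 : ℝ) 1) :
    (γ₀ ≠ 2 →
        ∫ ω, W ω / (max (W ω) b) ^ 2 ∂P ≤ 1 + C * (1 - b ^ (γ₀ - 2)) / (γ₀ - 2)) ∧
      (γ₀ = 2 →
        ∫ ω, W ω / (max (W ω) b) ^ 2 ∂P ≤ 1 + C * Real.log (1 / b)) := by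
  have key := clipped_le_rpow P W hW hW01 C γ₀ htail b hb
  have h0 : (0 : ℝ) ∉ Set.uIcc b 1 := by
    rw [Set.uIcc_of_le hb.2]; exact fun h => absurd h.1 (not_le.2 hb.1)
  constructor
  · intro hne
    rw [integral_rpow (Or.inr ⟨fun h => hne (by linarith), h0⟩), Real.one_rpow,
      show γ₀ - 3 + 1 = γ₀ - 2 by ring, ← mul_div_assoc] at key
    exact key
  · intro he
    have e : ∀ t : ℝ, t ^ (γ₀ - 3) = t⁻¹ := fun t => by
      rw [he, show (2 : ℝ) - 3 = -1 by norm_num, Real.rpow_neg_one]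
    simp_rw [e, integral_inv h0] at key
    exact key
end

section
/- Let W be a random variable on a probability space with values in (0,1] almost surely, suppose P(W ≤ π) ≤ C·π^(γ₀−1) for all π ∈ [0,1] with C ≥ 1 and γ₀ ∈ (1,2), and let b ∈ (0,1]. Then E[ W / max(W, b)² ] ≤ (1 + C/(2 − γ₀))·b^(γ₀−2). -/
open MeasureTheory

/-!
Since `W ≤ max W b`, the integrand is at most `f = (max W b)⁻¹`, which takes values in `[0, b⁻¹]`.
The tail bound gives `P (t ≤ f) ≤ C * t ^ (1 - γ₀)` for every `t > 0`: if `t ≤ 1` the right-hand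
side is at least `1`, and if `t > 1` the event is contained in `{W ≤ t⁻¹}`. The layer-cake formula
`∫ f = ∫ t in (0, b⁻¹], P (t ≤ f)` then yields `∫ f ≤ C / (2 - γ₀) * b ^ (γ₀ - 2)`, which is
slightly stronger than the claim.
-/

/-- under very weak overlap (`γ₀ ∈ (1,2)`), the clipped inverse-propensity
second moment satisfies `E[W/max(W,b)²] ≤ (1 + C/(2−γ₀))·b^(γ₀−2)`. -/
theorem stmt8 {Ω : Type*} [MeasurableSpace Ω] (P : Measure Ω) [IsProbabilityMeasure P]
    (W : Ω → ℝ) (hW : Measurable W)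
    (hW01 : ∀ᵐ ω ∂P, W ω ∈ Set.Ioc (0 : ℝ) 1)
    (C γ₀ : ℝ) (hC : 1 ≤ C) (hγ : γ₀ ∈ Set.Ioo (1 : ℝ) 2)
    (htail : ∀ π ∈ Set.Icc (0 : ℝ) 1, (P {ω | W ω ≤ π}).toReal ≤ C * π ^ (γ₀ - 1))
    (b : ℝ) (hb : b ∈ Set.Ioc (0 : ℝ) 1) :
    ∫ ω, W ω / (max (W ω) b) ^ 2 ∂P ≤ (1 + C / (2 - γ₀)) * b ^ (γ₀ - 2) := by
  obtain ⟨hγ1, hγ2⟩ := hγ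
  obtain ⟨hb0, hb1⟩ := hb
  have hmax : ∀ ω, 0 < max (W ω) b := fun ω => lt_max_of_lt_right hb0
  have hf0 : ∀ ω, 0 ≤ (max (W ω) b)⁻¹ := fun ω => (inv_pos.2 (hmax ω)).le
  have hfb : ∀ ω, (max (W ω) b)⁻¹ ≤ b⁻¹ := fun ω => inv_anti₀ hb0 (le_max_right _ _)
  have hfint : Integrable (fun ω => (max (W ω) b)⁻¹) P := by
    refine Integrable.of_bound (by fun_prop) b⁻¹ (ae_of_all _ fun ω => ?_)
    rw [Real.norm_of_nonneg (hf0 ω)]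
    exact hfb ω
  have hle : ∫ ω, W ω / (max (W ω) b) ^ 2 ∂P ≤ ∫ ω, (max (W ω) b)⁻¹ ∂P := by
    refine integral_mono_of_nonneg ?_ hfint (ae_of_all _ fun ω => ?_)
    · filter_upwards [hW01] with ω hω
      have := hω.1.le
      simp only [Pi.zero_apply]
      positivity
    · have := hmax ω
      simp only
      rw [div_le_iff₀ (by positivity), sq, inv_mul_cancel_left₀ this.ne']
      exact le_max_left _ _
  have htail' : ∀ t : ℝ, 0 < t → P.real {ω | t ≤ (max (W ω) b)⁻¹} ≤ C * t ^ (1 - γ₀) := by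
    intro t ht
    rcases le_total t 1 with h1 | h1
    · have h2 : 1 ≤ t ^ (1 - γ₀) :=
        Real.one_le_rpow_of_pos_of_le_one_of_nonpos ht h1 (by linarith)
      exact measureReal_le_one.trans (by nlinarith)
    · have h2 := htail t⁻¹ ⟨by positivity, inv_le_one_of_one_le₀ h1⟩
      rw [Real.inv_rpow ht.le, ← Real.rpow_neg ht.le, neg_sub] at h2
      refine le_trans (measureReal_mono fun ω hω => ?_) h2
      exact (le_max_left _ _).trans ((le_inv_comm₀ ht (hmax ω)).1 hω)
  have hint : IntervalIntegrable (fun t : ℝ => C * t ^ (1 - γ₀)) volume 0 b⁻¹ :=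
    (intervalIntegral.intervalIntegrable_rpow' (by linarith)).const_mul C
  have hb' : 0 ≤ b⁻¹ := (inv_pos.2 hb0).le
  have hlayer : ∫ ω, (max (W ω) b)⁻¹ ∂P ≤ ∫ t in (0 : ℝ)..b⁻¹, C * t ^ (1 - γ₀) := by
    rw [hfint.integral_eq_integral_Ioc_meas_le (ae_of_all _ hf0) (ae_of_all _ hfb),
      intervalIntegral.integral_of_le hb']
    refine integral_mono_of_nonneg (ae_of_all _ fun t => measureReal_nonneg)
      ((intervalIntegrable_iff_integrableOn_Ioc_of_le hb').1 hint) ?_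
    filter_upwards [ae_restrict_mem measurableSet_Ioc] with t ht
    exact htail' t ht.1
  have hcalc : ∫ t in (0 : ℝ)..b⁻¹, C * t ^ (1 - γ₀) = C / (2 - γ₀) * b ^ (γ₀ - 2) := by
    rw [intervalIntegral.integral_const_mul, integral_rpow (Or.inl (by linarith)),
      show 1 - γ₀ + 1 = 2 - γ₀ by ring, Real.zero_rpow (by linarith), Real.inv_rpow hb0.le,
      ← Real.rpow_neg hb0.le, neg_sub]
    ring
  have hpos : 0 < b ^ (γ₀ - 2) := Real.rpow_pos_of_pos hb0 _
  linarith
end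

section
/- Let γ₀ ∈ (1,2) and let W be a random variable on a probability space whose law on (0,1) has density (γ₀−1)·t^(γ₀−2) with respect to Lebesgue measure (equivalently, P(W ≤ t) = t^(γ₀−1) for t ∈ [0,1]). Then for every b ∈ (0,1], E[ W / max(W, b)² ] ≥ ((γ₀−1)/γ₀)·b^(γ₀−2). -/
open MeasureTheory

/-!
On `{W ≤ b}` the integrand equals `W / b²`, and elsewhere it is nonnegative, so it dominates
`(b · 1{W ≤ b} - (b - W)⁺) / b²`. The first term has mean `b · P(W ≤ b) = b ^ γ₀`, and the layer-cake
formula gives `E[(b - W)⁺] = ∫₀ᵇ P(W ≤ t) dt = b ^ γ₀ / γ₀` (`integral_posPart_sub`). The bound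
follows from `b ^ γ₀ - b ^ γ₀ / γ₀ = (γ₀ - 1) / γ₀ * b ^ γ₀`.
-/

/-- The put-option form of the layer-cake formula for the power-law distribution. -/
lemma integral_posPart_sub {Ω : Type*} [MeasurableSpace Ω] (P : Measure Ω) [IsProbabilityMeasure P]
    (γ₀ : ℝ) (hγ : γ₀ ∈ Set.Ioo (1 : ℝ) 2)
    (W : Ω → ℝ) (hcdf : ∀ t ∈ Set.Icc (0 : ℝ) 1, (P {ω | W ω ≤ t}).toReal = t ^ (γ₀ - 1))
    (hpos : ∀ᵐ ω ∂P, 0 < W ω)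
    (b : ℝ) (hb : b ∈ Set.Ioc (0 : ℝ) 1) (hint : Integrable (fun ω => max (b - W ω) 0) P) :
    ∫ ω, max (b - W ω) 0 ∂P = b ^ γ₀ / γ₀ := by
  obtain ⟨hb0, hb1⟩ := hb
  rw [hint.integral_eq_integral_Ioc_meas_le (M := b)
    (Filter.Eventually.of_forall fun ω => le_max_right _ _)
    (by filter_upwards [hpos] with ω h using max_le (by linarith) hb0.le)]
  have h1 : ∀ t ∈ Set.Ioc 0 b, P.real {a | t ≤ max (b - W a) 0} = (b - t) ^ (γ₀ - 1) := by
    intro t ht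
    rw [← hcdf (b - t) ⟨by linarith [ht.2], by linarith [ht.1]⟩, measureReal_def]
    congr 2
    ext ω
    simp only [Set.mem_ofPred_eq, le_max_iff, not_le.mpr ht.1, or_false]
    constructor <;> intro h <;> linarith
  rw [setIntegral_congr_fun measurableSet_Ioc h1, ← intervalIntegral.integral_of_le hb0.le,
    intervalIntegral.integral_comp_sub_left (fun x => x ^ (γ₀ - 1)) b,
    integral_rpow (Or.inl (by linarith [hγ.1]))]
  simp [Real.zero_rpow (show γ₀ ≠ 0 by linarith [hγ.1])]

/-- for the exact power-law propensity distribution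
(`P(W ≤ t) = t^(γ₀−1)` on `[0,1]`, `γ₀ ∈ (1,2)`), the clipped inverse-propensity
second moment is at least `((γ₀−1)/γ₀)·b^(γ₀−2)`. -/
theorem stmt9 {Ω : Type*} [MeasurableSpace Ω] (P : Measure Ω) [IsProbabilityMeasure P]
    (γ₀ : ℝ) (hγ : γ₀ ∈ Set.Ioo (1 : ℝ) 2)
    (W : Ω → ℝ) (hW : Measurable W)
    (hcdf : ∀ t ∈ Set.Icc (0 : ℝ) 1, (P {ω | W ω ≤ t}).toReal = t ^ (γ₀ - 1))
    (b : ℝ) (hb : b ∈ Set.Ioc (0 : ℝ) 1) :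
    (γ₀ - 1) / γ₀ * b ^ (γ₀ - 2) ≤ ∫ ω, W ω / (max (W ω) b) ^ 2 ∂P := by
  have hb0 := hb.1
  have hpos : ∀ᵐ ω ∂P, 0 < W ω := by
    have h := hcdf 0 (by simp)
    rw [Real.zero_rpow (by linarith [hγ.1]), ENNReal.toReal_eq_zero_iff] at h
    simpa [ae_iff] using h.resolve_right (measure_ne_top _ _)
  have hint : Integrable (fun ω => max (b - W ω) 0) P := by
    refine Integrable.of_bound (C := b) (by fun_prop) ?_
    filter_upwards [hpos] with ω h
    rw [Real.norm_of_nonneg (le_max_right _ _)]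
    exact max_le (by linarith) hb0.le
  -- The integrand is at most `1 / b`, so its Bochner integral is not the junk value.
  have hfint : Integrable (fun ω => W ω / (max (W ω) b) ^ 2) P := by
    refine Integrable.of_bound (C := 1 / b)
      (hW.div ((hW.max measurable_const).pow_const 2)).aestronglyMeasurable ?_
    filter_upwards [hpos] with ω h
    rw [Real.norm_of_nonneg (by positivity), div_le_div_iff₀ (by positivity) hb0, one_mul, sq]
    exact mul_le_mul (le_max_left _ _) (le_max_right _ _) hb0.le (by positivity)
  have hS : MeasurableSet {ω | W ω ≤ b} := measurableSet_le hW measurable_const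
  have hind : Integrable ({ω | W ω ≤ b}.indicator fun _ => b) P :=
    (integrable_const b).indicator hS
  have hle : ∫ ω, ({ω | W ω ≤ b}.indicator (fun _ => b) ω - max (b - W ω) 0) / b ^ 2 ∂P
      ≤ ∫ ω, W ω / (max (W ω) b) ^ 2 ∂P := by
    refine integral_mono_ae ((hind.sub hint).div_const _) hfint ?_
    filter_upwards [hpos] with ω h
    by_cases hw : W ω ≤ b
    · simp [Set.indicator, hw]
    · have hw' := (not_le.mp hw).le
      simp only [Set.indicator, Set.mem_ofPred_eq, hw, if_false,
        max_eq_right (sub_nonpos.mpr hw'), sub_zero, zero_div]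
      positivity
  refine le_of_eq_of_le ?_ hle
  rw [integral_div, integral_sub hind hint, integral_posPart_sub P γ₀ hγ W hcdf hpos b hb hint,
    integral_indicator_const _ hS, measureReal_def, hcdf b ⟨hb0.le, hb.2⟩, smul_eq_mul,
    Real.rpow_sub hb0, Real.rpow_sub hb0, Real.rpow_one, Real.rpow_two]
  have : γ₀ ≠ 0 := by linarith [hγ.1]
  field_simp
end

section
/- Let W be a random variable on a probability space with values in (0,1] almost surely, suppose P(W ≤ π) ≤ C·π^(γ₀−1) for all π ∈ [0,1] with C ≥ 1 and γ₀ > 2, and let b ∈ (0,1]. Then E[ 1{W ≤ b} / W ] ≤ C·((γ₀−1)/(γ₀−2))·b^(γ₀−2). -/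
open MeasureTheory

/-!
By the layer cake formula, `E[1{W ≤ b}/W] = ∫₀^∞ P(W ≤ b, 1/W ≥ t) dt`. The tail bound gives
`P(W ≤ b, 1/W ≥ t) ≤ C b^(γ₀-1)` for `t ≤ 1/b` and `≤ P(W ≤ 1/t) ≤ C t^(-(γ₀-1))` for `t > 1/b`.
The two ranges contribute `C b^(γ₀-2)` and `C b^(γ₀-2)/(γ₀-2)`, the second converging because
`γ₀ - 1 > 1`; their sum is the claimed bound. Working with the lower Lebesgue integral yields
integrability at the same time.
-/

theorem lintegral_inv_clipped_le {Ω : Type*} [MeasurableSpace Ω] (P : Measure Ω)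
    [IsProbabilityMeasure P] (W : Ω → ℝ) (hW : Measurable W)
    (hW01 : ∀ᵐ ω ∂P, W ω ∈ Set.Ioc (0 : ℝ) 1)
    (C γ₀ : ℝ) (hC : 1 ≤ C) (hγ : 2 < γ₀)
    (htail : ∀ π ∈ Set.Icc (0 : ℝ) 1, (P {ω | W ω ≤ π}).toReal ≤ C * π ^ (γ₀ - 1))
    (b : ℝ) (hb : b ∈ Set.Ioc (0 : ℝ) 1) :
    ∫⁻ ω in {ω | W ω ≤ b}, ENNReal.ofReal (1 / W ω) ∂P
      ≤ ENNReal.ofReal (C * ((γ₀ - 1) / (γ₀ - 2)) * b ^ (γ₀ - 2)) := by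
  obtain ⟨hb0, hb1⟩ := hb
  have htail' : ∀ π ∈ Set.Icc (0 : ℝ) 1,
      P {ω | W ω ≤ π} ≤ ENNReal.ofReal (C * π ^ (γ₀ - 1)) := fun π hπ =>
    ENNReal.le_ofReal_iff_toReal_le (measure_ne_top _ _)
      (mul_nonneg (by linarith) (Real.rpow_nonneg hπ.1 _)) |>.2 (htail π hπ)
  have hnn : 0 ≤ᵐ[P.restrict {ω | W ω ≤ b}] fun ω => 1 / W ω := by
    filter_upwards [ae_restrict_of_ae hW01] with ω hω
    exact one_div_nonneg.2 hω.1.le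
  have hbi : 0 < b⁻¹ := inv_pos.2 hb0
  rw [lintegral_eq_lintegral_meas_le _ hnn (by fun_prop),
    ← Set.Ioc_union_Ioi_eq_Ioi hbi.le,
    lintegral_union measurableSet_Ioi (Set.Ioc_disjoint_Ioi le_rfl)]
  have hpow : b ^ (γ₀ - 1) = b ^ (γ₀ - 2) * b := by
    rw [← Real.rpow_add_one hb0.ne']; congr 1; ring
  have h1 : ∫⁻ t in Set.Ioc 0 b⁻¹, P.restrict {ω | W ω ≤ b} {ω | t ≤ 1 / W ω}
      ≤ ENNReal.ofReal (C * b ^ (γ₀ - 2)) := by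
    calc _ ≤ ∫⁻ t in Set.Ioc 0 b⁻¹, ENNReal.ofReal (C * b ^ (γ₀ - 1)) := by
          refine lintegral_mono fun t => ?_
          refine (measure_mono (Set.subset_univ _)).trans ?_
          rw [Measure.restrict_apply_univ]
          exact htail' b ⟨hb0.le, hb1⟩
      _ = _ := by
          rw [setLIntegral_const, Real.volume_Ioc, ← ENNReal.ofReal_mul (by positivity)]
          congr 1
          rw [hpow]
          field_simp
          ring
  have h2 : ∫⁻ t in Set.Ioi b⁻¹, P.restrict {ω | W ω ≤ b} {ω | t ≤ 1 / W ω}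
      ≤ ENNReal.ofReal (C * (b ^ (γ₀ - 2) / (γ₀ - 2))) := by
    calc _ ≤ ∫⁻ t in Set.Ioi b⁻¹, ENNReal.ofReal (C * t ^ (-(γ₀ - 1))) := by
          refine setLIntegral_mono' measurableSet_Ioi fun t (ht : b⁻¹ < t) => ?_
          have ht0 : 0 < t := hbi.trans ht
          have hsub : {ω | t ≤ 1 / W ω} ⊆ {ω | W ω ≤ t⁻¹} := fun ω (hω : t ≤ 1 / W ω) => by
            have hw : 0 < W ω := one_div_pos.1 (ht0.trans_le hω)
            rw [one_div] at hω
            exact (le_inv_comm₀ ht0 hw).1 hω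
          refine (Measure.restrict_apply_le _ _).trans ((measure_mono hsub).trans ?_)
          rw [Real.rpow_neg ht0.le, ← Real.inv_rpow ht0.le]
          exact htail' _ ⟨(inv_pos.2 ht0).le,
            ((inv_lt_comm₀ hb0 ht0).1 ht).le.trans hb1⟩
      _ = _ := by
          have hlt : -(γ₀ - 1) < -1 := by linarith
          rw [← ofReal_integral_eq_lintegral_ofReal
              ((integrableOn_Ioi_rpow_of_lt hlt hbi).const_mul C), integral_const_mul,
            integral_Ioi_rpow_of_lt hlt hbi]
          · have e : -(γ₀ - 1) + 1 = -(γ₀ - 2) := by ring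
            rw [e, Real.rpow_neg hbi.le, Real.inv_rpow hb0.le, inv_inv, neg_div_neg_eq]
          · filter_upwards [ae_restrict_mem measurableSet_Ioi] with t ht
            exact mul_nonneg (by linarith) (Real.rpow_nonneg (hbi.trans ht).le _)
  refine (add_le_add h1 h2).trans ?_
  have hg : 0 < γ₀ - 2 := by linarith
  rw [← ENNReal.ofReal_add (by positivity) (by positivity)]
  apply le_of_eq
  congr 1
  field_simp
  ring

/-- under somewhat weak overlap (`γ₀ > 2`), the inverse propensity on the
clipped region is integrable and `E[1{W ≤ b}/W] ≤ C·((γ₀−1)/(γ₀−2))·b^(γ₀−2)`. -/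
theorem stmt10 {Ω : Type*} [MeasurableSpace Ω] (P : Measure Ω) [IsProbabilityMeasure P]
    (W : Ω → ℝ) (hW : Measurable W)
    (hW01 : ∀ᵐ ω ∂P, W ω ∈ Set.Ioc (0 : ℝ) 1)
    (C γ₀ : ℝ) (hC : 1 ≤ C) (hγ : 2 < γ₀)
    (htail : ∀ π ∈ Set.Icc (0 : ℝ) 1, (P {ω | W ω ≤ π}).toReal ≤ C * π ^ (γ₀ - 1))
    (b : ℝ) (hb : b ∈ Set.Ioc (0 : ℝ) 1) :
    IntegrableOn (fun ω => 1 / W ω) {ω | W ω ≤ b} P ∧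
      ∫ ω in {ω | W ω ≤ b}, 1 / W ω ∂P
        ≤ C * ((γ₀ - 1) / (γ₀ - 2)) * b ^ (γ₀ - 2) := by
  have key := lintegral_inv_clipped_le P W hW hW01 C γ₀ hC hγ htail b hb
  have hnn : 0 ≤ᵐ[P.restrict {ω | W ω ≤ b}] fun ω => 1 / W ω := by
    filter_upwards [ae_restrict_of_ae hW01] with ω hω
    exact one_div_nonneg.2 hω.1.le
  have hm : AEStronglyMeasurable (fun ω => 1 / W ω) (P.restrict {ω | W ω ≤ b}) :=
    (measurable_const.div hW).aestronglyMeasurable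
  refine ⟨⟨hm, (hasFiniteIntegral_iff_ofReal hnn).2 (key.trans_lt ENNReal.ofReal_lt_top)⟩, ?_⟩
  rw [integral_eq_lintegral_of_nonneg_ae hnn hm]
  refine ENNReal.toReal_le_of_le_ofReal ?_ key
  have h1 : 0 < γ₀ - 1 := by linarith
  have h2 : 0 < γ₀ - 2 := by linarith
  have hb0 := hb.1
  positivity
end

section
/- Let W be a random variable on a probability space with values in (0,1] almost surely, let b ∈ (0,1], and suppose nondegenerate overlap holds at b in the sense that P(W ≤ b/2) ≤ (1 − ρ)·P(W ≤ b) for some ρ ∈ (0,1]. Then E[ W / max(W, b)² ] ≥ (ρ/(2b))·P(W ≤ b). -/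
open MeasureTheory

/-! On the band `b/2 < W ≤ b` the integrand equals `W / b² ≥ 1 / (2b)`, and it is a.e. nonnegative
elsewhere, so the integral is at least `P(b/2 < W ≤ b) / (2b)`. Nondegenerate overlap says exactly
that the band carries at least a fraction `ρ` of `P(W ≤ b)`. -/

/-- under nondegenerate overlap at `b`
(`P(W ≤ b/2) ≤ (1−ρ)·P(W ≤ b)`), the clipped inverse-propensity second moment
satisfies `E[W/max(W,b)²] ≥ (ρ/(2b))·P(W ≤ b)`. -/
theorem stmt11 {Ω : Type*} [MeasurableSpace Ω] (P : Measure Ω) [IsProbabilityMeasure P]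
    (W : Ω → ℝ) (hW : Measurable W)
    (hW01 : ∀ᵐ ω ∂P, W ω ∈ Set.Ioc (0 : ℝ) 1)
    (b : ℝ) (hb : b ∈ Set.Ioc (0 : ℝ) 1)
    (ρ : ℝ) (hρ : ρ ∈ Set.Ioc (0 : ℝ) 1)
    (hnd : (P {ω | W ω ≤ b / 2}).toReal ≤ (1 - ρ) * (P {ω | W ω ≤ b}).toReal) :
    ρ / (2 * b) * (P {ω | W ω ≤ b}).toReal
      ≤ ∫ ω, W ω / (max (W ω) b) ^ 2 ∂P := by
  obtain ⟨hb0, -⟩ := hb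
  have hA : MeasurableSet {ω | W ω ≤ b / 2} := measurableSet_le hW measurable_const
  have hB : MeasurableSet {ω | W ω ≤ b} := measurableSet_le hW measurable_const
  set S : Set Ω := {ω | W ω ≤ b} \ {ω | W ω ≤ b / 2} with hSdef
  have hS : MeasurableSet S := hB.diff hA
  have hsub : {ω | W ω ≤ b / 2} ⊆ {ω | W ω ≤ b} := by
    intro ω h
    simp only [Set.mem_ofPred_eq] at h ⊢
    linarith
  have hPS : ρ * P.real {ω | W ω ≤ b} ≤ P.real S := by
    rw [hSdef, measureReal_sdiff hsub hA]
    simp only [Measure.real]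
    linarith
  -- The integrand is bounded by `1 / b²`, so its Bochner integral is not a junk value.
  have hint : Integrable (fun ω => W ω / (max (W ω) b) ^ 2) P := by
    refine Integrable.of_bound (C := 1 / b ^ 2)
      (hW.div ((hW.max measurable_const).pow_const 2)).aestronglyMeasurable ?_
    filter_upwards [hW01] with ω hω
    have h0 : 0 < W ω := hω.1
    have h1 : W ω ≤ 1 := hω.2
    rw [Real.norm_of_nonneg (by positivity)]
    gcongr
    exact le_max_right _ _
  have hle : S.indicator (fun _ => 1 / (2 * b)) ≤ᵐ[P] fun ω => W ω / (max (W ω) b) ^ 2 := by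
    filter_upwards [hW01] with ω hω
    have h0 : 0 < W ω := hω.1
    by_cases hmem : ω ∈ S
    · have hWb : W ω ≤ b := hmem.1
      have hbW : b / 2 < W ω := not_le.mp hmem.2
      rw [Set.indicator_of_mem hmem, max_eq_right hWb, div_le_div_iff₀ (by positivity)
        (by positivity)]
      nlinarith
    · rw [Set.indicator_of_notMem hmem]
      positivity
  calc ρ / (2 * b) * (P {ω | W ω ≤ b}).toReal
      = 1 / (2 * b) * (ρ * P.real {ω | W ω ≤ b}) := by rw [Measure.real]; ring
    _ ≤ 1 / (2 * b) * P.real S := by gcongr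
    _ = ∫ ω, S.indicator (fun _ => 1 / (2 * b)) ω ∂P := by
      rw [integral_indicator_const _ hS, smul_eq_mul, mul_comm]
    _ ≤ ∫ ω, W ω / (max (W ω) b) ^ 2 ∂P :=
      integral_mono_ae ((integrable_const _).indicator hS) hint hle
end

section
/- Let (Ω, 𝒜, P) be a probability space, let e : Ω → ℝ and ê : Ω → ℝ be measurable with 0 < e ≤ 1 and ê ≥ 0 everywhere, and let μ, μ̂ : Ω → ℝ be measurable. Suppose there are constants r_μ ≥ 0 and r_e with 0 < r_e ≤ b ≤ 1 such that |μ̂(ω) − μ(ω)| ≤ r_μ and |ê(ω) − e(ω)| ≤ r_e for all ω. Then | E[ (μ̂ − μ)·( max(ê, b) − e ) / max(ê, b) ] | ≤ r_μ·P( e ≤ b + r_e ) + r_μ·r_e·E[ 1{e > b + r_e} / (e − r_e) ]. -/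
/-!
With `m = max ehat b`, the weight `(m - e) / m` is at most `1` in absolute value where `e ≤ b + re`,
because there `e ≤ b + re ≤ 2 * b ≤ 2 * m`. Where `b + re < e`, the uniform error bound gives
`b < e - re ≤ ehat`, so clipping is inactive and the weight is at most `re / (e - re)`. Multiplying
by `rμ` yields a bounded dominating function; its integral is the claimed bound.
-/

open MeasureTheory

theorem abs_clip_weight_le_one {e ehat re b : ℝ} (he : 0 < e) (hb : 0 < b) (hreb : re ≤ b)
    (h : e ≤ b + re) : |(max ehat b - e) / max ehat b| ≤ 1 := by
  have hm : b ≤ max ehat b := le_max_right _ _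
  have hm0 : 0 < max ehat b := hb.trans_le hm
  rw [abs_div, abs_of_pos hm0, div_le_one hm0, abs_le]
  constructor <;> linarith

theorem abs_clip_weight_le_div {e ehat re b : ℝ} (hb : 0 < b) (h : b + re < e)
    (herr : |ehat - e| ≤ re) : |(max ehat b - e) / max ehat b| ≤ re * (1 / (e - re)) := by
  have h1 := (abs_le.1 herr).1
  have hlow : e - re ≤ ehat := by linarith
  have hm : max ehat b = ehat := max_eq_left (by linarith)
  have h0 : 0 < e - re := by linarith
  rw [hm, abs_div, abs_of_pos (h0.trans_le hlow), mul_one_div]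
  exact div_le_div₀ ((abs_nonneg _).trans herr) herr h0 hlow


/-- bias bound for clipped AIPW under cross-fitting: with sup-norm
nuisance errors `r_μ` and `r_e ≤ b`, the conditional bias
`E[(μ̂ − μ)(max(ê,b) − e)/max(ê,b)]` is bounded by
`r_μ·P(e ≤ b + r_e) + r_μ·r_e·E[1{e > b + r_e}/(e − r_e)]`. -/
theorem stmt12 {Ω : Type*} [MeasurableSpace Ω] (P : Measure Ω) [IsProbabilityMeasure P]
    (e ehat μ μhat : Ω → ℝ)
    (he : Measurable e) (hehat : Measurable ehat)
    (hμ : Measurable μ) (hμhat : Measurable μhat)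
    (he01 : ∀ ω, e ω ∈ Set.Ioc (0 : ℝ) 1) (hehat0 : ∀ ω, 0 ≤ ehat ω)
    (rμ re b : ℝ) (hrμ : 0 ≤ rμ) (hre : 0 < re) (hreb : re ≤ b) (hb1 : b ≤ 1)
    (hμerr : ∀ ω, |μhat ω - μ ω| ≤ rμ) (heerr : ∀ ω, |ehat ω - e ω| ≤ re) :
    |∫ ω, (μhat ω - μ ω) * (max (ehat ω) b - e ω) / max (ehat ω) b ∂P|
      ≤ rμ * (P {ω | e ω ≤ b + re}).toReal
          + rμ * re * ∫ ω in {ω | b + re < e ω}, 1 / (e ω - re) ∂P := by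
  have hb : 0 < b := hre.trans_le hreb
  have hA : MeasurableSet {ω | e ω ≤ b + re} := measurableSet_le he measurable_const
  have hB : MeasurableSet {ω | b + re < e ω} := measurableSet_lt measurable_const he
  have hintA : Integrable ({ω | e ω ≤ b + re}.indicator fun _ => (1 : ℝ)) P :=
    (integrable_const 1).indicator hA
  have hintB : Integrable ({ω | b + re < e ω}.indicator fun ω => 1 / (e ω - re)) P := by
    refine Integrable.of_bound
      (((measurable_const.div (he.sub_const re)).indicator hB).aestronglyMeasurable) (1 / b)
      (Filter.Eventually.of_forall fun ω => ?_)
    by_cases h : b + re < e ω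
    · rw [Set.indicator_of_mem (by exact h), Real.norm_eq_abs,
        abs_of_pos (one_div_pos.2 (by linarith))]
      exact one_div_le_one_div_of_le hb (by linarith)
    · rw [Set.indicator_of_notMem (by exact h), norm_zero]
      positivity
  have key := norm_integral_le_of_norm_le (μ := P)
    (f := fun ω => (μhat ω - μ ω) * (max (ehat ω) b - e ω) / max (ehat ω) b)
    ((hintA.const_mul rμ).add (hintB.const_mul (rμ * re)))
    (Filter.Eventually.of_forall fun ω => by
      rw [Real.norm_eq_abs, mul_div_assoc, abs_mul]
      simp only [Pi.add_apply]
      by_cases h : e ω ≤ b + re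
      · rw [Set.indicator_of_mem (by exact h), Set.indicator_of_notMem (by exact not_lt.2 h),
          mul_zero, add_zero]
        exact mul_le_mul (hμerr ω) (abs_clip_weight_le_one (he01 ω).1 hb hreb h)
          (abs_nonneg _) hrμ
      · rw [Set.indicator_of_notMem (by exact h), Set.indicator_of_mem (by exact not_le.1 h),
          mul_zero, zero_add, mul_assoc]
        exact mul_le_mul (hμerr ω) (abs_clip_weight_le_div hb (not_le.1 h) (heerr ω))
          (abs_nonneg _) hrμ)
  have hsum := integral_add (hintA.const_mul rμ) (hintB.const_mul (rμ * re))
  rw [integral_const_mul, integral_const_mul, integral_indicator hA, integral_indicator hB,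
    setIntegral_const, smul_eq_mul, mul_one] at hsum
  exact key.trans_eq hsum
end

section
/- Let (Ω, 𝒜, P) be a probability space, let e : Ω → ℝ and ê : Ω → ℝ be measurable with 0 < e ≤ 1 and ê ≥ 0 everywhere, and suppose |ê(ω) − e(ω)| ≤ r for all ω, where 0 < 2r ≤ b ≤ 1. Then E[ e · ( 1/max(ê, b) − 1/max(e, b) )² ] ≤ ((12·b·r + r²)/b²) · E[ e / max(e, b)² ]. -/
open MeasureTheory

/-!
The bound holds pointwise. With `A = max(ê, b)` and `B = max(e, b)`,
`(1/A − 1/B)² = (A − B)² / (A² B²) ≤ (r² / b²) · (1 / B²)`, because `A ≥ b` and truncation at `b`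
is 1-Lipschitz, so `|A − B| ≤ r`. Multiplying by `e` and integrating gives the claim already with
the smaller constant `r² / b²`; the dominating function `e / B²` is integrable, being bounded by
`1 / b²`.
-/

lemma sq_one_div_sub_one_div_le {A B b r : ℝ} (hb : 0 < b) (hA : b ≤ A) (hB : b ≤ B)
    (h : |A - B| ≤ r) : (1 / A - 1 / B) ^ 2 ≤ r ^ 2 / b ^ 2 * (1 / B ^ 2) := by
  have hA0 : 0 < A := hb.trans_le hA
  have hB0 : 0 < B := hb.trans_le hB
  have h2 : (A - B) ^ 2 ≤ r ^ 2 := sq_le_sq' (abs_le.1 h).1 (abs_le.1 h).2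
  calc (1 / A - 1 / B) ^ 2 = (A - B) ^ 2 / A ^ 2 * (1 / B ^ 2) := by field_simp; ring
    _ ≤ r ^ 2 / b ^ 2 * (1 / B ^ 2) := by gcongr

/-- orthogonalized inverse propensities: with sup-norm propensity error
`r` and `0 < 2r ≤ b ≤ 1`,
`E[e·(1/max(ê,b) − 1/max(e,b))²] ≤ ((12br + r²)/b²)·E[e/max(e,b)²]`. -/
theorem stmt13 {Ω : Type*} [MeasurableSpace Ω] (P : Measure Ω) [IsProbabilityMeasure P]
    (e ehat : Ω → ℝ) (he : Measurable e) (hehat : Measurable ehat)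
    (he01 : ∀ ω, e ω ∈ Set.Ioc (0 : ℝ) 1) (hehat0 : ∀ ω, 0 ≤ ehat ω)
    (r b : ℝ) (hr : 0 < r) (hrb : 2 * r ≤ b) (hb1 : b ≤ 1)
    (heerr : ∀ ω, |ehat ω - e ω| ≤ r) :
    ∫ ω, e ω * (1 / max (ehat ω) b - 1 / max (e ω) b) ^ 2 ∂P
      ≤ (12 * b * r + r ^ 2) / b ^ 2 * ∫ ω, e ω / (max (e ω) b) ^ 2 ∂P := by
  have hb : 0 < b := by linarith
  have hint : Integrable (fun ω => e ω / (max (e ω) b) ^ 2) P := by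
    refine Integrable.of_bound (C := 1 / b ^ 2)
      (he.div ((he.max measurable_const).pow_const 2)).aestronglyMeasurable
      (Filter.Eventually.of_forall fun ω => ?_)
    have h0 := (he01 ω).1
    have h1 := (he01 ω).2
    rw [Real.norm_of_nonneg (by positivity)]
    gcongr
    exact le_max_right _ _
  rw [← integral_const_mul]
  refine integral_mono_of_nonneg (Filter.Eventually.of_forall fun ω => ?_)
    (hint.const_mul _) (Filter.Eventually.of_forall fun ω => ?_)
  · exact mul_nonneg (he01 ω).1.le (sq_nonneg _)
  · have h0 := (he01 ω).1
    have hB : 0 < max (e ω) b := lt_max_of_lt_right hb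
    have key := sq_one_div_sub_one_div_le hb (le_max_right (ehat ω) b) (le_max_right (e ω) b)
      ((abs_max_sub_max_le_abs _ _ _).trans (heerr ω))
    calc e ω * (1 / max (ehat ω) b - 1 / max (e ω) b) ^ 2
        ≤ e ω * (r ^ 2 / b ^ 2 * (1 / max (e ω) b ^ 2)) := by gcongr
      _ = r ^ 2 / b ^ 2 * (e ω / max (e ω) b ^ 2) := by ring
      _ ≤ (12 * b * r + r ^ 2) / b ^ 2 * (e ω / max (e ω) b ^ 2) := by
        gcongr
        exact le_add_of_nonneg_left (by positivity)
end

section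
/- Let W be a random variable on a probability space with values in [0,1] almost surely, suppose P(W ≤ π) ≤ C·π^(γ₀−1) for all π ∈ [0,1] with C ≥ 1 and γ₀ > 1, let d ≥ 1 be an integer, let h ∈ (0,1], and let A be an event with P(A) ≥ h^d. Then E[ W·1_A ] ≥ 2^(−(γ₀+1)/(γ₀−1)) · C^(−1/(γ₀−1)) · h^(d/(γ₀−1)) · P(A). -/
/-! Truncate at the level `t = (h ^ d / (2 * C)) ^ (1 / (γ₀ - 1))`. It is chosen so that the tail bound
gives `P (W ≤ t) ≤ h ^ d / 2 ≤ P A / 2`, whence `W > t` on at least half of `A`, and Markov's inequality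
on `A` yields `t * P A / 2 ≤ ∫ ω in A, W ω ∂P`. This is the claim with the better power of two
`2 ^ (-γ₀ / (γ₀ - 1))`. -/

open MeasureTheory

/-- minimal expected nearby treated observations: if `P(A) ≥ h^d`, then
`E[W·1_A] ≥ 2^(−(γ₀+1)/(γ₀−1))·C^(−1/(γ₀−1))·h^(d/(γ₀−1))·P(A)`. -/
theorem stmt15 {Ω : Type*} [MeasurableSpace Ω] (P : Measure Ω) [IsProbabilityMeasure P]
    (W : Ω → ℝ) (hW : Measurable W)
    (hW01 : ∀ᵐ ω ∂P, W ω ∈ Set.Icc (0 : ℝ) 1)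
    (C γ₀ : ℝ) (hC : 1 ≤ C) (hγ : 1 < γ₀)
    (htail : ∀ π ∈ Set.Icc (0 : ℝ) 1, (P {ω | W ω ≤ π}).toReal ≤ C * π ^ (γ₀ - 1))
    (d : ℕ) (hd : 1 ≤ d) (h : ℝ) (hh : h ∈ Set.Ioc (0 : ℝ) 1)
    (A : Set Ω) (hA : MeasurableSet A) (hPA : h ^ (d : ℝ) ≤ (P A).toReal) :
    (2 : ℝ) ^ (-(γ₀ + 1) / (γ₀ - 1)) * C ^ (-(1 / (γ₀ - 1))) * h ^ ((d : ℝ) / (γ₀ - 1))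
        * (P A).toReal
      ≤ ∫ ω in A, W ω ∂P := by
  obtain ⟨h0, h1⟩ := hh
  have ha : 0 < γ₀ - 1 := by linarith
  have hC0 : 0 < C := by linarith
  set a := γ₀ - 1 with ha_def
  set t : ℝ := 2 ^ (-(1 / a)) * C ^ (-(1 / a)) * h ^ ((d : ℝ) / a) with ht
  have hneg : -(1 / a) ≤ 0 := by
    have : 0 < 1 / a := by positivity
    linarith
  have ht0 : 0 < t := by positivity
  have ht1 : t ≤ 1 := by
    have e1 : (2 : ℝ) ^ (-(1 / a)) ≤ 1 := Real.rpow_le_one_of_one_le_of_nonpos (by norm_num) hneg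
    have e2 : C ^ (-(1 / a)) ≤ 1 := Real.rpow_le_one_of_one_le_of_nonpos hC hneg
    have e3 : h ^ ((d : ℝ) / a) ≤ 1 := Real.rpow_le_one h0.le h1 (by positivity)
    exact mul_le_one₀ (mul_le_one₀ e1 (by positivity) e2) (by positivity) e3
  have hta : C * t ^ a = h ^ (d : ℝ) / 2 := by
    have e : -(1 / a) * a = -1 := by field_simp
    have e' : (d : ℝ) / a * a = d := by field_simp
    rw [ht, Real.mul_rpow (by positivity) (by positivity),
      Real.mul_rpow (by positivity) (by positivity), ← Real.rpow_mul (by norm_num),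
      ← Real.rpow_mul hC0.le, ← Real.rpow_mul h0.le, e, e', Real.rpow_neg_one, Real.rpow_neg_one]
    field_simp
  have htl := htail t ⟨ht0.le, ht1⟩
  have hint : Integrable W P := by
    refine Integrable.of_bound hW.aestronglyMeasurable 1 ?_
    filter_upwards [hW01] with ω hω
    rw [Real.norm_eq_abs, abs_of_nonneg hω.1]
    exact hω.2
  have hmarkov := mul_meas_ge_le_integral_of_nonneg (μ := P.restrict A) (f := W)
    (ae_restrict_of_ae (hW01.mono fun ω hω => hω.1)) hint.integrableOn t
  have hsplit : P.real A ≤ (P.restrict A).real {ω | t ≤ W ω} + P.real {ω | W ω ≤ t} := by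
    rw [measureReal_restrict_apply (measurableSet_le measurable_const hW)]
    refine le_trans (measureReal_mono ?_) (measureReal_union_le _ _)
    intro ω hω
    rcases le_total t (W ω) with hl | hl
    · exact Or.inl ⟨hl, hω⟩
    · exact Or.inr hl
  have hhalf : P.real A / 2 ≤ (P.restrict A).real {ω | t ≤ W ω} := by
    simp only [measureReal_def] at hsplit ⊢
    linarith
  have h2 : (2 : ℝ) ^ (-(γ₀ + 1) / a) ≤ 2 ^ (-(1 / a)) * (1 / 2) := by
    have e : -(1 / a) + -1 = -γ₀ / a := by
      rw [ha_def] at ha ⊢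
      field_simp
      ring
    rw [one_div (2 : ℝ), ← Real.rpow_neg_one, ← Real.rpow_add (by norm_num), e]
    gcongr
    · norm_num
    · linarith
  calc _ ≤ 2 ^ (-(1 / a)) * (1 / 2) * C ^ (-(1 / a)) * h ^ ((d : ℝ) / a) * P.real A := by
        simp only [measureReal_def]
        gcongr
    _ = t * (P.real A / 2) := by rw [ht]; ring
    _ ≤ t * (P.restrict A).real {ω | t ≤ W ω} := by gcongr
    _ ≤ _ := hmarkov
end

section
/- For every C ≥ 1, γ₀ > 1, β > 0 and integer d ≥ 1, there exists a constant B ≥ 2 (depending only on C, γ₀, β, d) with the following property. Let (Ω, 𝒜, P) be a probability space, X : Ω → ℝ^d a random vector uniformly distributed on the cube [−1,1]^d, and e : ℝ^d → [0,1] measurable with P(e(X) ≤ π) ≤ C·π^(γ₀−1) for all π ∈ [0,1]. Let n ≥ 1 be a real number, h ∈ (0,1], and let x₁, …, x_m ∈ [−1,1]^d be points with ‖x_j − x_{j'}‖_∞ ≥ h for all j ≠ j', such that n·E[ e(X)·1{‖X − x_j‖_∞ ≤ h/d} ] ≤ (h/d)^(−2β) for every j = 1, …, m. Then m ≤ B·(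 n·h^(2β + d·γ₀/(γ₀−1)) )^(1−γ₀). -/
/-!
The bound is a volume count with Markov's inequality. Shrink the balls to radius `r = h / (3 * d)`, so
that they are pairwise disjoint (for every `d ≥ 1`) and each still has mass at least
`p = (r / 2) ^ d` under the uniform law (`mass_ball`). Since `e ≥ 0`, the hypothesis bounds the
integral of `e(X)` over the smaller ball by `v = (h / d) ^ (-(2 * β)) / n`. With `π = 2 * v / p`, Markov's
inequality leaves mass at least `p / 2` in each ball on which `e(X) ≤ π` (`mass_low`). Adding up
over the `m` disjoint balls, `m p / 2 ≤ P(e(X) ≤ π) ≤ C π ^ (γ₀ - 1)`; when `π > 1` the last bound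
holds because `C ≥ 1`. Solving for `m` gives the exponents claimed (`final_algebra`).
-/

open MeasureTheory

/-- The cube `[-1,1]^d` in `Fin d → ℝ`. -/
def unitCube (d : ℕ) : Set (Fin d → ℝ) :=
  Set.Icc (fun _ => (-1 : ℝ)) (fun _ => (1 : ℝ))

lemma volume_unitCube (d : ℕ) : (volume (unitCube d)).toReal = 2 ^ d := by
  unfold unitCube
  rw [Real.volume_Icc_pi_toReal (fun _ => by norm_num)]
  norm_num

/-- A sup-norm ball of radius `r ≤ 1` centred in the cube meets the cube in a box with all sides
at least `r`. -/
lemma volume_ball_inter {d : ℕ} {x : Fin d → ℝ} (hx : x ∈ unitCube d) {r : ℝ} (hr : 0 < r)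
    (hr1 : r ≤ 1) :
    r ^ d ≤ (volume (Metric.closedBall x r ∩ unitCube d)).toReal := by
  obtain ⟨hx1, hx2⟩ := hx
  have key : ∀ i, r ≤ min (x i + r) 1 - max (x i - r) (-1) := by
    intro i
    have h1 := hx1 i
    have h2 := hx2 i
    simp only at h1 h2
    rcases min_cases (x i + r) 1 with h | h <;> rcases max_cases (x i - r) (-1) with h' | h' <;>
      linarith
  have hset : Metric.closedBall x r ∩ unitCube d
      = Set.Icc (fun i => max (x i - r) (-1)) (fun i => min (x i + r) 1) := by
    ext y
    simp only [unitCube, Set.mem_inter_iff, Metric.mem_closedBall, dist_pi_le_iff hr.le,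
      Real.dist_eq, abs_le, Set.mem_Icc, Pi.le_def, max_le_iff, le_min_iff]
    constructor
    · rintro ⟨h, h1, h2⟩
      exact ⟨fun i => ⟨by linarith [(h i).1], h1 i⟩, fun i => ⟨by linarith [(h i).2], h2 i⟩⟩
    · rintro ⟨h1, h2⟩
      exact ⟨fun i => ⟨by linarith [(h1 i).1], by linarith [(h2 i).1]⟩, fun i => (h1 i).2,
        fun i => (h2 i).2⟩
  rw [hset, Real.volume_Icc_pi_toReal (fun i => by simp only; linarith [key i])]
  calc r ^ d = ∏ _i : Fin d, r := by simp
    _ ≤ _ := Finset.prod_le_prod (fun _ _ => hr.le) (fun i _ => key i)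

lemma mass_ball {d : ℕ} {Ω : Type} [MeasurableSpace Ω] {P : Measure Ω}
    {X : Ω → (Fin d → ℝ)} (hX : Measurable X)
    (hmap : Measure.map X P = (volume (unitCube d))⁻¹ • volume.restrict (unitCube d))
    {x : Fin d → ℝ} (hx : x ∈ unitCube d) {r : ℝ} (hr : 0 < r) (hr1 : r ≤ 1) :
    (r / 2) ^ d ≤ P.real (X ⁻¹' Metric.closedBall x r) := by
  have h1 : P (X ⁻¹' Metric.closedBall x r)
      = (volume (unitCube d))⁻¹ * volume (Metric.closedBall x r ∩ unitCube d) := by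
    rw [← Measure.map_apply hX Metric.isClosed_closedBall.measurableSet, hmap, Measure.smul_apply,
      Measure.restrict_apply Metric.isClosed_closedBall.measurableSet, smul_eq_mul]
  rw [Measure.real, h1, ENNReal.toReal_mul, ENNReal.toReal_inv, volume_unitCube, div_pow,
    div_eq_inv_mul]
  exact mul_le_mul_of_nonneg_left (volume_ball_inter hx hr hr1) (by positivity)

/-- Markov's inequality on the event `A`: if `f` has integral at most `v` on `A` and `A` has mass
at least `p`, then `f ≤ 2 * v / p` on at least half of that mass. -/
lemma mass_low {Ω : Type} [MeasurableSpace Ω] {P : Measure Ω} [IsProbabilityMeasure P]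
    {f : Ω → ℝ} (hf : Measurable f) (hf01 : ∀ ω, f ω ∈ Set.Icc (0 : ℝ) 1) {A : Set Ω}
    {p v : ℝ} (hp : 0 < p) (hv : 0 < v) (hpA : p ≤ P.real A)
    (hint : ∫ ω in A, f ω ∂P ≤ v) :
    p / 2 ≤ P.real (A ∩ {ω | f ω ≤ 2 * v / p}) := by
  have hfi : Integrable f (P.restrict A) :=
    Integrable.of_bound hf.aestronglyMeasurable 1 (ae_of_all _ fun ω => by
      rw [Real.norm_eq_abs, abs_of_nonneg (hf01 ω).1]; exact (hf01 ω).2)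
  have hm := mul_meas_ge_le_integral_of_nonneg (μ := P.restrict A) (f := f)
    (ae_of_all _ fun ω => (hf01 ω).1) hfi (2 * v / p)
  have hms : MeasurableSet {ω | 2 * v / p ≤ f ω} := measurableSet_le measurable_const hf
  rw [measureReal_restrict_apply hms] at hm
  have h1 : P.real ({ω | 2 * v / p ≤ f ω} ∩ A) ≤ p / 2 := by
    have h2 := hm.trans hint
    rw [div_mul_eq_mul_div, div_le_iff₀ hp] at h2
    nlinarith
  have h3 : P.real A ≤ P.real (A ∩ {ω | f ω ≤ 2 * v / p})
      + P.real ({ω | 2 * v / p ≤ f ω} ∩ A) := by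
    refine (measureReal_mono ?_).trans (measureReal_union_le _ _)
    intro ω hω
    rcases le_total (f ω) (2 * v / p) with h | h
    · exact Or.inl ⟨hω, h⟩
    · exact Or.inr ⟨h, hω⟩
  linarith

/-- Solving `m p / 2 ≤ C π ^ (γ - 1)` for `m`, where `p = c h ^ d`, `π = 2 * v / p` and
`v = D ^ (2 * β) h ^ (-(2 * β)) / n`. -/
lemma final_algebra {C γ β D c n h m : ℝ} {d : ℕ} (hγ : 1 < γ) (hD : 0 < D)
    (hc : 0 < c) (hn : 1 ≤ n) (hh : 0 < h)
    (H : m * ((c * h ^ d) / 2)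
      ≤ C * (2 * ((h / D) ^ (-(2 * β)) / n) / (c * h ^ d)) ^ (γ - 1)) :
    m ≤ (2 * C / c * (2 * D ^ (2 * β) / c) ^ (γ - 1))
      * (n * h ^ (2 * β + d * γ / (γ - 1))) ^ (1 - γ) := by
  have hn0 : 0 < n := by linarith
  have hγ' : γ - 1 ≠ 0 := by linarith
  have e1 : 2 * ((h / D) ^ (-(2 * β)) / n) / (c * h ^ d)
      = (2 * D ^ (2 * β) / c) * (n * h ^ (2 * β + d))⁻¹ := by
    rw [Real.div_rpow hh.le hD.le, Real.rpow_neg hh.le, Real.rpow_neg hD.le, Real.rpow_add hh,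
      Real.rpow_natCast]
    field_simp
  have e2 : (n * h ^ (2 * β + d * γ / (γ - 1))) ^ (1 - γ)
      = (h ^ d)⁻¹ * ((n * h ^ (2 * β + d))⁻¹) ^ (γ - 1) := by
    have e3 : 2 * β + d * γ / (γ - 1) = (2 * β + d) + d / (γ - 1) := by
      field_simp; ring
    have e4 : (h ^ ((d : ℝ) / (γ - 1))) ^ (γ - 1) = h ^ d := by
      rw [← Real.rpow_mul hh.le, div_mul_cancel₀ _ hγ', Real.rpow_natCast]
    rw [e3, Real.rpow_add hh _ ((d : ℝ) / (γ - 1)), ← mul_assoc, show 1 - γ = -(γ - 1) by ring,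
      Real.rpow_neg (by positivity), Real.mul_rpow (by positivity) (by positivity), e4,
      Real.inv_rpow (by positivity), mul_inv, mul_comm]
  rw [e1, Real.mul_rpow (by positivity) (by positivity)] at H
  rw [e2]
  have hpos : 0 < c * h ^ d / 2 := by positivity
  rw [← le_div_iff₀ hpos] at H
  refine H.trans (le_of_eq ?_)
  field_simp

/-- counting gridpoints with few nearby treated observations. For
`X` uniform on `[−1,1]^d` (sup norm), a `(C,γ₀)` propensity tail bound, and
`h`-separated points `x₁,…,x_m` with
`n·E[e(X)·1{‖X−x_j‖ ≤ h/d}] ≤ (h/d)^(−2β)`, the number of such points satisfies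
`m ≤ B·(n·h^(2β + d·γ₀/(γ₀−1)))^(1−γ₀)` for a constant `B ≥ 2` depending only on
`C, γ₀, β, d`. -/
theorem stmt16 (C γ₀ β : ℝ) (hC : 1 ≤ C) (hγ : 1 < γ₀) (hβ : 0 < β)
    (d : ℕ) (hd : 1 ≤ d) :
    ∃ B : ℝ, 2 ≤ B ∧
      ∀ (Ω : Type) [MeasurableSpace Ω] (P : Measure Ω) [IsProbabilityMeasure P]
        (X : Ω → (Fin d → ℝ)), Measurable X →
        Measure.map X P = (volume (unitCube d))⁻¹ • volume.restrict (unitCube d) →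
        ∀ (e : (Fin d → ℝ) → ℝ), Measurable e → (∀ x, e x ∈ Set.Icc (0 : ℝ) 1) →
        (∀ π ∈ Set.Icc (0 : ℝ) 1, (P {ω | e (X ω) ≤ π}).toReal ≤ C * π ^ (γ₀ - 1)) →
        ∀ (n : ℝ), 1 ≤ n → ∀ (h : ℝ), h ∈ Set.Ioc (0 : ℝ) 1 →
        ∀ (m : ℕ) (x : Fin m → (Fin d → ℝ)),
          (∀ j, x j ∈ unitCube d) →
          (∀ j j', j ≠ j' → h ≤ ‖x j - x j'‖) →
          (∀ j, n * ∫ ω in {ω | ‖X ω - x j‖ ≤ h / d}, e (X ω) ∂P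
              ≤ (h / d) ^ (-(2 * β))) →
          (m : ℝ) ≤ B * (n * h ^ (2 * β + d * γ₀ / (γ₀ - 1))) ^ (1 - γ₀) := by
  have hd1 : (1 : ℝ) ≤ d := by exact_mod_cast hd
  have hd0 : (0 : ℝ) < d := by linarith
  set c : ℝ := (1 / (6 * d)) ^ d with hc_def
  have hc : 0 < c := by positivity
  refine ⟨max 2 (2 * C / c * (2 * (d : ℝ) ^ (2 * β) / c) ^ (γ₀ - 1)), le_max_left _ _, ?_⟩
  intro Ω _ P _ X hX hmap e he he01 htail n hn h hh m x hx hsep hint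
  obtain ⟨hh0, hh1⟩ := hh
  have hn0 : 0 < n := by linarith
  have hrd : h / (3 * d) ≤ h / d := by gcongr; linarith
  have hr3 : h / (3 * d) ≤ h / 3 := by gcongr; linarith
  have hr : 0 < h / (3 * d) := by positivity
  set r : ℝ := h / (3 * d) with hr_def
  have hp_eq : (r / 2) ^ d = c * h ^ d := by
    rw [hc_def, ← mul_pow, hr_def]; congr 1; field_simp; norm_num
  have hv : 0 < (h / d) ^ (-(2 * β)) / n := by positivity
  have hp : 0 < c * h ^ d := by positivity
  set A : Fin m → Set Ω := fun j => X ⁻¹' Metric.closedBall (x j) r with hA_def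
  have hA : ∀ j, MeasurableSet (A j) := fun j => hX Metric.isClosed_closedBall.measurableSet
  have hf : Measurable fun ω => e (X ω) := he.comp hX
  have hfi : Integrable (fun ω => e (X ω)) P :=
    Integrable.of_bound hf.aestronglyMeasurable 1 (ae_of_all _ fun ω => by
      rw [Real.norm_eq_abs, abs_of_nonneg (he01 _).1]; exact (he01 _).2)
  have hintA : ∀ j, ∫ ω in A j, e (X ω) ∂P ≤ (h / d) ^ (-(2 * β)) / n := by
    intro j
    have h1 : ∫ ω in A j, e (X ω) ∂P ≤ ∫ ω in {ω | ‖X ω - x j‖ ≤ h / d}, e (X ω) ∂P := by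
      refine setIntegral_mono_set hfi.integrableOn (ae_of_all _ fun ω => (he01 _).1) ?_
      refine LE.le.eventuallyLE fun ω hω => ?_
      have hω' : dist (X ω) (x j) ≤ r := hω
      rw [dist_eq_norm] at hω'
      exact hω'.trans hrd
    refine h1.trans ?_
    rw [le_div_iff₀ hn0, mul_comm]
    exact hint j
  set q : ℝ := 2 * ((h / d) ^ (-(2 * β)) / n) / (c * h ^ d) with hq_def
  have hq : 0 < q := by positivity
  set E : Set Ω := {ω | e (X ω) ≤ q} with hE_def
  have hE : MeasurableSet E := measurableSet_le hf measurable_const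
  have hlow : ∀ j, c * h ^ d / 2 ≤ P.real (A j ∩ E) := fun j =>
    mass_low hf (fun ω => he01 _) hp hv
      (hp_eq ▸ mass_ball hX hmap (hx j) hr (by linarith)) (hintA j)
  have hdisj : Pairwise (Function.onFun Disjoint fun j => A j ∩ E) := by
    intro j k hjk
    refine Disjoint.mono Set.inter_subset_left Set.inter_subset_left ?_
    refine Disjoint.preimage X (Metric.closedBall_disjoint_closedBall ?_)
    have := hsep j k hjk
    rw [dist_eq_norm]
    linarith
  have hsum : m * (c * h ^ d / 2) ≤ P.real E := by
    calc m * (c * h ^ d / 2) = ∑ _j : Fin m, c * h ^ d / 2 := by simp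
      _ ≤ ∑ j, P.real (A j ∩ E) := Finset.sum_le_sum fun j _ => hlow j
      _ = P.real (⋃ j, A j ∩ E) :=
        (measureReal_iUnion_fintype hdisj fun j => (hA j).inter hE).symm
      _ ≤ P.real E := measureReal_mono (Set.iUnion_subset fun j => Set.inter_subset_right)
  have htail' : P.real E ≤ C * q ^ (γ₀ - 1) := by
    rcases le_total q 1 with h1 | h1
    · exact htail q ⟨hq.le, h1⟩
    · have h2 : 1 ≤ q ^ (γ₀ - 1) := Real.one_le_rpow h1 (by linarith)
      have h3 : P.real E ≤ 1 := measureReal_le_one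
      nlinarith
  refine (final_algebra hγ hd0 hc hn hh0 (hsum.trans htail')).trans ?_
  exact mul_le_mul_of_nonneg_right (le_max_right _ _) (by positivity)
end

section
/- Let β > 0, γ₀ > 1 and an integer d ≥ 1 be given, and set s = 2β + d·γ₀/(γ₀−1). For a real number n ≥ 1 and a parameter δ > 1, define sequences recursively by h₁ = n^(−1/s), and for each k ≥ 1, m_k = exp( 2^(−k)·δ·(h_k/h₁)^(−2β) ) and h_{k+1} = ( n·(m_k/δ)^(γ₀−1) )^(−1/s). Then there exist δ̲ > 0 and π ∈ (0, (1/4)^(2β)], depending only on β, γ₀ and d, such that for every δ ≥ δ̲ and every real n ≥ 1: the series ∑_{k=1}^∞ m_k diverges to infinity, and h_k ≤ h₁·π^(k−1) for every k ≥ 2. -/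
/-!
Write `h k = h 1 * r k`, so `r 1 = 1` and `r (k+1) = (m k / δ) ^ (-c)` with `c = (γ₀ - 1) / s`;
the parameter `n` drops out. The ratio `π` is chosen so small that also `π ^ (2β) ≤ 1/4`. Then
`r k ≤ π ^ (k-1)` makes the exponent of `m k` at least `2^(-k) δ 4^(k-1) ≥ δ k / 2`
(`grouping_exponent_lower`). Since `log δ ≤ δ / 4` for `δ ≥ 64`, this dominates
`log δ + k L` with `L = -log π / c` once `δ ≥ 64 + 4 |L|`, and this is exactly what
`r (k+1) ≤ π ^ k` requires, so the bound propagates by induction. Divergence of the series holds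
because every `m k` is the exponential of a nonnegative number, hence at least `1`.
-/

open Filter

lemma log_le_quarter {δ : ℝ} (h : 64 ≤ δ) : Real.log δ ≤ δ / 4 := by
  -- `log δ = 2 log √δ ≤ 2 √δ`, and `√δ ≥ 8`.
  have h0 : 0 ≤ δ := by linarith
  have h8 : 8 ≤ Real.sqrt δ := Real.le_sqrt_of_sq_le (by norm_num; exact h)
  have h1 := Real.log_le_sub_one_of_pos (show 0 < Real.sqrt δ by linarith)
  rw [Real.log_sqrt h0] at h1
  nlinarith [Real.sq_sqrt h0]

/-- The geometric bound on `r` makes the exponent defining `m k` grow at least linearly in `k`: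
the factor `4 ^ (k-1)` gained from `r ^ (-2β)` beats the damping `2 ^ (-k)`. -/
lemma grouping_exponent_lower {β π δ r : ℝ} (hβ : 0 < β) (hπ : 0 < π)
    (hπ4 : π ^ (2 * β) ≤ 1 / 4) (hδ : 0 < δ) (hr : 0 < r) (k : ℕ)
    (hrk : r ≤ π ^ k) :
    δ * ((k : ℝ) + 1) / 2 ≤ (2 : ℝ) ^ (-((k + 1 : ℕ) : ℝ)) * δ * r ^ (-(2 * β)) := by
  have h4 : (4 : ℝ) ^ k ≤ r ^ (-(2 * β)) := by
    have h1 : r ^ (2 * β) ≤ (1 / 4 : ℝ) ^ k := by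
      calc r ^ (2 * β) ≤ (π ^ k) ^ (2 * β) :=
            Real.rpow_le_rpow hr.le hrk (by positivity)
        _ = (π ^ (2 * β)) ^ k := Real.rpow_pow_comm hπ.le _ _ |>.symm
        _ ≤ (1 / 4 : ℝ) ^ k := pow_le_pow_left₀ (by positivity) hπ4 k
    rw [Real.rpow_neg hr.le]
    rw [one_div, inv_pow] at h1
    exact (le_inv_comm₀ (by positivity) (by positivity)).1 h1
  have hb : ((k : ℝ) + 1) ≤ 2 ^ k := by exact_mod_cast Nat.lt_two_pow_self (n := k)
  have h2 : (2 : ℝ) ^ (-((k + 1 : ℕ) : ℝ)) = ((2 : ℝ) ^ k * 2)⁻¹ := by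
    rw [Real.rpow_neg (by norm_num), Real.rpow_natCast, pow_succ]
  rw [h2]
  calc δ * ((k : ℝ) + 1) / 2 ≤ δ * 2 ^ k / 2 := by gcongr
    _ = ((2 : ℝ) ^ k * 2)⁻¹ * δ * 4 ^ k := by
        rw [show (4 : ℝ) = 2 * 2 by norm_num, mul_pow]; field_simp
    _ ≤ _ := by gcongr

/-- the inductive grouping recursion. With `s = 2β + d·γ₀/(γ₀−1)`,
`h₁ = n^(−1/s)`, `m_k = exp(2^(−k)·δ·(h_k/h₁)^(−2β))` and
`h_{k+1} = (n·(m_k/δ)^(γ₀−1))^(−1/s)`, there are `δ̲ > 0` and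
`π ∈ (0, (1/4)^(2β)]`, depending only on `β, γ₀, d`, such that for all `δ ≥ δ̲`
(with `δ > 1`) and all `n ≥ 1`, the series `∑ m_k` diverges and
`h_k ≤ h₁·π^(k−1)` for all `k ≥ 2`. -/
theorem stmt17 (β γ₀ : ℝ) (d : ℕ) (hβ : 0 < β) (hγ : 1 < γ₀) (hd : 1 ≤ d) :
    ∃ δlow : ℝ, 0 < δlow ∧
      ∃ π : ℝ, π ∈ Set.Ioc (0 : ℝ) ((1 / 4 : ℝ) ^ (2 * β)) ∧
        ∀ δ : ℝ, 1 < δ → δlow ≤ δ → ∀ n : ℝ, 1 ≤ n →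
          ∀ h m : ℕ → ℝ,
            h 1 = n ^ (-(1 / (2 * β + d * γ₀ / (γ₀ - 1)))) →
            (∀ k, 1 ≤ k →
              m k = Real.exp ((2 : ℝ) ^ (-(k : ℝ)) * δ * (h k / h 1) ^ (-(2 * β)))) →
            (∀ k, 1 ≤ k →
              h (k + 1)
                = (n * (m k / δ) ^ (γ₀ - 1)) ^ (-(1 / (2 * β + d * γ₀ / (γ₀ - 1))))) →
            Tendsto (fun K => ∑ k ∈ Finset.Icc 1 K, m k) atTop atTop ∧
              ∀ k, 2 ≤ k → h k ≤ h 1 * π ^ (k - 1) := by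
  set s : ℝ := 2 * β + d * γ₀ / (γ₀ - 1) with hs
  have hg : 0 < γ₀ - 1 := by linarith
  have hs0 : 0 < s := by positivity
  set c : ℝ := (γ₀ - 1) / s with hc
  have hc0 : 0 < c := by positivity
  -- The second entry gives `π ^ (2β) ≤ 1/4`.
  set π : ℝ := min ((1 / 4 : ℝ) ^ (2 * β)) ((1 / 4 : ℝ) ^ (1 / (2 * β))) with hπdef
  have hπ : 0 < π := lt_min (by positivity) (by positivity)
  have hπ4 : π ^ (2 * β) ≤ 1 / 4 := by
    calc π ^ (2 * β) ≤ ((1 / 4 : ℝ) ^ (1 / (2 * β))) ^ (2 * β) :=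
          Real.rpow_le_rpow hπ.le (min_le_right _ _) (by positivity)
      _ = 1 / 4 := by
          rw [← Real.rpow_mul (by norm_num), one_div_mul_cancel (by positivity), Real.rpow_one]
  set L : ℝ := -Real.log π / c with hL
  refine ⟨64 + 4 * |L|, by positivity, π, ⟨hπ, min_le_left _ _⟩, ?_⟩
  intro δ _ hδ n hn h m h1 hm hh
  have hδ64 : 64 ≤ δ := by linarith [abs_nonneg L]
  have hδ0 : 0 < δ := by linarith
  have hn0 : 0 < n := by linarith
  have h1pos : 0 < h 1 := by rw [h1]; positivity
  have key : ∀ k : ℕ, 0 < h (k + 1) ∧ h (k + 1) / h 1 ≤ π ^ k := by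
    intro k
    induction k with
    | zero => exact ⟨h1pos, by simp [div_self h1pos.ne']⟩
    | succ k ih =>
      obtain ⟨ihp, ihle⟩ := ih
      have hexp := grouping_exponent_lower hβ hπ hπ4 hδ0 (div_pos ihp h1pos) k ihle
      have hmk := hm (k + 1) (by omega)
      have hmpos : 0 < m (k + 1) := by rw [hmk]; positivity
      have hrec := hh (k + 1) (by omega)
      have hlow : Real.exp (((k : ℝ) + 1) * L) ≤ m (k + 1) / δ := by
        rw [le_div_iff₀ hδ0, hmk]
        nth_rewrite 1 [← Real.exp_log hδ0]
        rw [← Real.exp_add]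
        refine Real.exp_le_exp.2 (le_trans ?_ hexp)
        have := log_le_quarter hδ64
        have hLd : L ≤ δ / 4 := by linarith [le_abs_self L]
        have hk : (0 : ℝ) ≤ k := Nat.cast_nonneg k
        nlinarith
      have hsplit : h (k + 1 + 1) = h 1 * (m (k + 1) / δ) ^ (-c) := by
        rw [hrec, h1, Real.mul_rpow hn0.le (by positivity), ← Real.rpow_mul (by positivity)]
        congr 2
        rw [hc]; ring
      refine ⟨by rw [hsplit]; positivity, ?_⟩
      rw [hsplit, mul_div_cancel_left₀ _ h1pos.ne']
      calc (m (k + 1) / δ) ^ (-c) ≤ (Real.exp (((k : ℝ) + 1) * L)) ^ (-c) :=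
            Real.rpow_le_rpow_of_nonpos (Real.exp_pos _) hlow (by linarith)
        _ = Real.exp (Real.log π * ((k + 1 : ℕ) : ℝ)) := by
            rw [← Real.exp_mul, hL]; congr 1; push_cast; field_simp
        _ = π ^ (k + 1) := by
            rw [← Real.rpow_def_of_pos hπ, Real.rpow_natCast]
  constructor
  · refine tendsto_atTop_mono (fun K => ?_) tendsto_natCast_atTop_atTop
    calc (K : ℝ) = ∑ k ∈ Finset.Icc 1 K, (1 : ℝ) := by simp
      _ ≤ _ := Finset.sum_le_sum fun k hk => by
        have hk1 := (Finset.mem_Icc.1 hk).1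
        obtain ⟨j, rfl⟩ : ∃ j, k = j + 1 := ⟨k - 1, by omega⟩
        have hpos := div_pos (key j).1 h1pos
        rw [hm _ hk1]
        exact Real.one_le_exp (by positivity)
  · intro k hk
    obtain ⟨j, rfl⟩ : ∃ j, k = j + 1 := ⟨k - 1, by omega⟩
    have := (div_le_iff₀ h1pos).1 (key j).2
    rw [Nat.add_sub_cancel]
    linarith
end

section
/- Let γ₀ ∈ (1,2) and let (r_{μ,n})_{n≥1} and (r_{e,n})_{n≥1} be sequences of positive reals such that n^(1/3)·r_{μ,n} → 0 and n^(1/3)·r_{e,n} → 0 as n → ∞. Then there exists a sequence (b_n)_{n≥1} with b_n ∈ (0,1) for all n such that: b_n → 0; r_{e,n}/b_n → 0; n^(1/2)·r_{μ,n}·r_{e,n}·b_n^((γ₀−2)/2) → 0; and n^(1/2)·r_{μ,n}·b_n^(γ₀/2) → 0. -/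
/-!
The threshold `b_n = n^(-1/3)` works for every `γ₀ ∈ (1,2)`. With this choice
`r_{e,n} / b_n = n^(1/3) r_{e,n}`, and the two remaining quantities are
`(n^(1/3) r_{μ,n}) (n^(1/3) r_{e,n}) n^((1-γ₀)/6)` and `(n^(1/3) r_{μ,n}) n^((1-γ₀)/6)`.
The rate hypotheses send the bracketed factors to zero, and `γ₀ > 1` sends the last one to zero.
-/

open Filter

/-- under very weak overlap (`γ₀ ∈ (1,2)`), shared nuisance rates faster
than `n^(−1/3)` admit a clipping-threshold sequence `b_n ∈ (0,1)` with `b_n → 0`,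
`r_{e,n}/b_n → 0`, `√n·r_{μ,n}·r_{e,n}·b_n^((γ₀−2)/2) → 0` and
`√n·r_{μ,n}·b_n^(γ₀/2) → 0`. -/
theorem stmt19 (γ₀ : ℝ) (hγ : γ₀ ∈ Set.Ioo (1 : ℝ) 2)
    (rμ re : ℕ → ℝ) (hrμ : ∀ n, 0 < rμ n) (hre : ∀ n, 0 < re n)
    (hrμ3 : Tendsto (fun n : ℕ => (n : ℝ) ^ ((1 : ℝ) / 3) * rμ n) atTop (nhds 0))
    (hre3 : Tendsto (fun n : ℕ => (n : ℝ) ^ ((1 : ℝ) / 3) * re n) atTop (nhds 0)) :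
    ∃ b : ℕ → ℝ, (∀ n, b n ∈ Set.Ioo (0 : ℝ) 1) ∧
      Tendsto b atTop (nhds 0) ∧
      Tendsto (fun n : ℕ => re n / b n) atTop (nhds 0) ∧
      Tendsto
        (fun n : ℕ => (n : ℝ) ^ ((1 : ℝ) / 2) * rμ n * re n * b n ^ ((γ₀ - 2) / 2))
        atTop (nhds 0) ∧
      Tendsto (fun n : ℕ => (n : ℝ) ^ ((1 : ℝ) / 2) * rμ n * b n ^ (γ₀ / 2))
        atTop (nhds 0) := by
  have hcast : Tendsto (fun n : ℕ => (n : ℝ)) atTop atTop := tendsto_natCast_atTop_atTop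
  have hdecay : Tendsto (fun n : ℕ => (n : ℝ) ^ (-((γ₀ - 1) / 6))) atTop (nhds 0) :=
    (tendsto_rpow_neg_atTop (by linarith [hγ.1])).comp hcast
  -- `n^(-1/3)` equals `1` at `n = 1`, and at `n = 0` it is `0` by the junk-value
  -- convention `0 ^ x = 0` for `x ≠ 0`; these two values are replaced to keep `b n` inside `(0,1)`.
  let b : ℕ → ℝ := fun n => if n < 2 then 1 / 2 else (n : ℝ) ^ (-((1 : ℝ) / 3))
  have hb : ∀ n, 2 ≤ n → b n = (n : ℝ) ^ (-((1 : ℝ) / 3)) := fun n hn =>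
    if_neg (not_lt.mpr hn)
  have hpos : ∀ n : ℕ, 2 ≤ n → (0 : ℝ) < n := fun n hn => by
    exact_mod_cast (by omega : 0 < n)
  have hbpow : ∀ n, 2 ≤ n → ∀ c : ℝ, b n ^ c = (n : ℝ) ^ (-(c / 3)) := fun n hn c => by
    rw [hb n hn, ← Real.rpow_mul (hpos n hn).le]
    congr 1
    ring
  refine ⟨b, fun n => ?_, ?_, ?_, ?_, ?_⟩
  · by_cases hn : n < 2
    · simp only [b, if_pos hn]
      norm_num
    · rw [hb n (not_lt.mp hn)]
      have h1 : (1 : ℝ) < n := by exact_mod_cast (by omega : 1 < n)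
      exact ⟨Real.rpow_pos_of_pos (by linarith) _,
        Real.rpow_lt_one_of_one_lt_of_neg h1 (by norm_num)⟩
  · refine ((tendsto_rpow_neg_atTop (by norm_num : (0 : ℝ) < 1 / 3)).comp hcast).congr' ?_
    filter_upwards [eventually_ge_atTop 2] with n hn
    exact (hb n hn).symm
  · refine hre3.congr' ?_
    filter_upwards [eventually_ge_atTop 2] with n hn
    rw [hb n hn, Real.rpow_neg (hpos n hn).le, div_inv_eq_mul, mul_comm]
  · have h := (hrμ3.mul hre3).mul hdecay
    rw [mul_zero] at h
    refine h.congr' ?_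
    filter_upwards [eventually_ge_atTop 2] with n hn
    have hexp : (n : ℝ) ^ ((1 : ℝ) / 3) * (n : ℝ) ^ ((1 : ℝ) / 3) * (n : ℝ) ^ (-((γ₀ - 1) / 6))
        = (n : ℝ) ^ ((1 : ℝ) / 2) * (n : ℝ) ^ (-((γ₀ - 2) / 2 / 3)) := by
      simp only [← Real.rpow_add (hpos n hn)]
      congr 1
      ring
    rw [hbpow n hn]
    linear_combination (rμ n * re n) * hexp
  · have h := hrμ3.mul hdecay
    rw [zero_mul] at h
    refine h.congr' ?_
    filter_upwards [eventually_ge_atTop 2] with n hn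
    have hexp : (n : ℝ) ^ ((1 : ℝ) / 3) * (n : ℝ) ^ (-((γ₀ - 1) / 6))
        = (n : ℝ) ^ ((1 : ℝ) / 2) * (n : ℝ) ^ (-(γ₀ / 2 / 3)) := by
      simp only [← Real.rpow_add (hpos n hn)]
      congr 1
      ring
    rw [hbpow n hn]
    linear_combination rμ n * hexp
end
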